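/- Let (X,d,μ) be a metric measure space such that μ has n independent Alberti representations. Then the lower Hausdorff dimension of μ is at least n; that is, every Borel set B ⊂ X with μ(B) > 0 satisfies dim_H B ≥ n. -/

import Mathlib

open MeasureTheory Metric Set Filter Topology ENNReal NNReal
open scoped RealInnerProductSpace

noncomputable section

namespace BKO

/-- `ℝⁿ` with the Euclidean metric. -/
abbrev E (n : ℕ) : Type := EuclideanSpace ℝ (Fin n)

variable {X : Type*} [MetricSpace X]

/-- A set `G ⊆ ℝ × X` is the graph of a curve fragment if all first coordinates lie
in `[0,1]` and it is the graph of a `2`-biLipschitz function defined on a subset of `[0,1]`. -/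
def IsFragmentGraph (X : Type*) [MetricSpace X] (G : Set (ℝ × X)) : Prop :=
  (∀ p ∈ G, p.1 ∈ Set.Icc (0:ℝ) 1) ∧
  ∀ p ∈ G, ∀ q ∈ G, |p.1 - q.1| ≤ 2 * dist p.2 q.2 ∧ dist p.2 q.2 ≤ 2 * |p.1 - q.1|

/-- The space `Γ(X)` of curve fragments, identified with their graphs (nonempty compact
subsets of `[0,1] × X`), with the Hausdorff metric `d_Γ(γ₁,γ₂) = d_H(gr γ₁, gr γ₂)`. -/
def Fragment (X : Type*) [MetricSpace X] : Type _ :=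
  {G : TopologicalSpace.NonemptyCompacts (ℝ × X) // IsFragmentGraph X (G : Set (ℝ × X))}

instance : MetricSpace (Fragment X) :=
  inferInstanceAs (MetricSpace {G : TopologicalSpace.NonemptyCompacts (ℝ × X) // _})

instance : MeasurableSpace (Fragment X) := borel _
instance : BorelSpace (Fragment X) := ⟨rfl⟩

namespace Fragment

/-- The graph of a curve fragment. -/
def graph (γ : Fragment X) : Set (ℝ × X) := (γ.1 : Set (ℝ × X))

/-- The (compact) domain of a curve fragment. -/
def dom (γ : Fragment X) : Set ℝ := Prod.fst '' γ.graph

/-- The image of a curve fragment. -/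
def im (γ : Fragment X) : Set X := Prod.snd '' γ.graph

/-- The function `dom γ → X` determined by the graph (junk value off the domain). -/
def fn (γ : Fragment X) (t : ℝ) : X :=
  @dite X (∃ x, (t, x) ∈ γ.graph) (Classical.dec _)
    (fun h => h.choose) (fun _ => γ.1.nonempty.choose.2)

/-- `γ_* 𝓛¹`: the pushforward under `γ` of Lebesgue measure restricted to `dom γ`. -/
def measure [MeasurableSpace X] (γ : Fragment X) : Measure X :=
  (volume.restrict γ.dom).map γ.fn

end Fragment

/-- The measure `ν(ℙ)`, `ν(ℙ)(B) = ∫ γ_*𝓛¹(B) dℙ(γ)`. -/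
def nu [MeasurableSpace X] (ℙ : Measure (Fragment X)) : Measure X :=
  ℙ.bind Fragment.measure

/-- The cone `C(w,θ) = {v : |⟨v,w⟩| ≥ θ‖v‖}`. -/
def cone {n : ℕ} (w : E n) (θ : ℝ) : Set (E n) := {v | θ * ‖v‖ ≤ |⟪v, w⟫|}

/-- A cone in `ℝⁿ` is a set of the form `C(w,θ)` with `w ∈ Sⁿ⁻¹`, `θ ∈ (0,1)`. -/
def IsCone {n : ℕ} (C : Set (E n)) : Prop :=
  ∃ (w : E n) (θ : ℝ), ‖w‖ = 1 ∧ θ ∈ Set.Ioo (0:ℝ) 1 ∧ C = cone w θ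

/-- `γ` is a `C`-curve with respect to `φ`. -/
def IsConeCurve {n : ℕ} (φ : X → E n) (C : Set (E n)) (γ : Fragment X) : Prop :=
  ∃ δ > (0:ℝ), ∀ p ∈ γ.graph, ∀ q ∈ γ.graph,
    φ p.2 - φ q.2 ∈ C \ Metric.ball 0 (δ * |p.1 - q.1|)

/-- `ℙ` is a `C`-Alberti representation of `μ` with respect to `φ`. -/
def IsConeAlbertiRep [MeasurableSpace X] {n : ℕ} (μ : Measure X) (φ : X → E n)
    (C : Set (E n)) (ℙ : Measure (Fragment X)) : Prop :=
  IsProbabilityMeasure ℙ ∧ μ ≪ nu ℙ ∧ ∀ᵐ γ ∂ℙ, IsConeCurve φ C γ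

/-- `S` is `C`-null with respect to `φ`: every `C`-curve meets `S` in `𝓗¹`-measure zero. -/
def ConeNull [MeasurableSpace X] [BorelSpace X] {n : ℕ} (φ : X → E n) (C : Set (E n))
    (S : Set X) : Prop :=
  ∀ γ : Fragment X, IsConeCurve φ C γ → μH[1] (γ.im ∩ S) = 0

/-- Cones `C₁,…,C_m` are independent. -/
def IndepCones {n m : ℕ} (C : Fin m → Set (E n)) : Prop :=
  ∀ v : Fin m → E n, (∀ i, v i ∈ C i ∧ v i ≠ 0) → LinearIndependent ℝ v

/-- `μ` has `n` independent Alberti representations. -/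
def HasIndepAlberti [MeasurableSpace X] (μ : Measure X) (n : ℕ) : Prop :=
  ∃ φ : X → E n, (∃ K, LipschitzWith K φ) ∧ ∃ C : Fin n → Set (E n),
    (∀ i, IsCone (C i)) ∧ IndepCones C ∧ ∀ i, ∃ ℙ, IsConeAlbertiRep μ φ (C i) ℙ

/-- The collection `𝒮(φ)` of singular sets. -/
def MemScal [MeasurableSpace X] [BorelSpace X] {n : ℕ} (φ : X → E n) (S : Set X) : Prop :=
  MeasurableSet S ∧ ∀ θ ∈ Set.Ioo (0:ℝ) 1, ∃ (m : ℕ) (S' : Fin m → Set X) (w : Fin m → E n),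
    S = (⋃ i, S' i) ∧ ∀ i, MeasurableSet (S' i) ∧ ‖w i‖ = 1 ∧ ConeNull φ (cone (w i) θ) (S' i)

/-- `Lip(f,x) = limsup_{r→0⁺} sup_{d(x,y)≤r} |f(y)-f(x)|/r`. -/
def lipAt (f : X → ℝ) (x : X) : ℝ :=
  Filter.limsup (fun r : ℝ => sSup ((fun y => |f y - f x| / r) '' Metric.closedBall x r))
    (𝓝[>] (0:ℝ))

/-- `ind φ = {x : Lip(D⬝φ, x) > 0 for all D ∈ Sⁿ⁻¹}`. -/
def indSet {n : ℕ} (φ : X → E n) : Set X :=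
  {x | ∀ D : E n, ‖D‖ = 1 → 0 < lipAt (fun y => ⟪φ y, D⟫) x}

/-- `f` is differentiable with respect to `φ` at `x₀`, with a unique derivative. -/
def DiffWrtAt {n : ℕ} (φ : X → E n) (f : X → ℝ) (x₀ : X) : Prop :=
  ∃! L : E n →ₗ[ℝ] ℝ,
    Filter.Tendsto (fun x => |f x - f x₀ - L (φ x - φ x₀)| / dist x x₀) (𝓝[≠] x₀) (𝓝 0)

/-- `(X,d,μ)` is a Lipschitz differentiability space, with all chart dimensions
satisfying the predicate `P`. -/
def IsLipDiffSpaceWith [MeasurableSpace X] (μ : Measure X) (P : ℕ → Prop) : Prop :=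
  ∃ (N : ℕ → ℕ) (U : ℕ → Set X) (φ : (i : ℕ) → X → E (N i)),
    (∀ i, P (N i)) ∧ (∀ i, MeasurableSet (U i)) ∧ (⋃ i, U i) = Set.univ ∧
    (∀ i, ∃ K, LipschitzWith K (φ i)) ∧
    ∀ f : X → ℝ, (∃ K, LipschitzWith K f) →
      ∀ i, ∀ᵐ x ∂μ, x ∈ U i → DiffWrtAt (φ i) f x

/-- `ρ` is an upper gradient of `f`. -/
def IsUpperGradient (f ρ : X → ℝ) : Prop :=
  ∀ γ : ℝ → X, LipschitzOnWith 1 γ (Set.Icc 0 1) →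
    |f (γ 1) - f (γ 0)| ≤ ∫ t in Set.Icc (0:ℝ) 1, ρ (γ t)

/-- `ρ` is a `*`-upper gradient of `f`. -/
def IsStarUpperGradient (f ρ : X → ℝ) : Prop :=
  ∀ γ : Fragment X, LipschitzOnWith 1 γ.fn γ.dom →
    ∀ᵐ t ∂(volume.restrict γ.dom),
      ∀ v : ℝ, HasDerivWithinAt (f ∘ γ.fn) v γ.dom t → |v| ≤ ρ (γ.fn t)

/-- The dyadic cube of side length `2^{-m}` in `[0,1)ⁿ` indexed by `k`. -/
def dyadicCube (n m : ℕ) (k : Fin n → Fin (2 ^ m)) : Set (E n) :=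
  {x | ∀ i, (k i : ℝ) / 2 ^ m ≤ x i ∧ x i < ((k i : ℝ) + 1) / 2 ^ m}

variable {X : Type*} [MetricSpace X] [CompleteSpace X] [TopologicalSpace.SeparableSpace X]
  [MeasurableSpace X] [BorelSpace X]

/-!
For unit vectors in independent cones, linear independence is uniform by compactness. Hence for
small `η` there are linear coordinates on `ℝⁿ` in which vectors `η`-close to the `i`-th direction
are almost parallel to the `i`-th axis. Since `φ ∘ γ` is differentiable almost everywhere, each
Alberti representation is carried by countably many pieces on which the increments of `φ ∘ γ` are
`η`-close to one fixed direction of the cone and have speed bounded below.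

Choose one piece for each of the `n` representations. The mass which the `i`-th piece gives to a
cube of side `M⁻ᵏ` is at most a constant times `M⁻ᵏ` times the measure of the set of curves hitting
the cube. Subdividing a cube once and applying the Loomis–Whitney inequality costs only a factor
`3ⁿ` (the number of neighbouring columns a narrow set can enter), which is negligible against
a power of `M` when `M` is large. Iterating over scales gives a multilinear Kakeya inequality, by
which the infimum of the `n` pieces vanishes on every `𝓗ˢ`-null set with `s < n`. If `dim_H B < n`,
then all these infima vanish on `B`, and so does `μ`.
-/

section LoomisWhitney

lemma lmarginal_update_self {ι α : Type*} [DecidableEq ι] [MeasurableSpace α] (μ : ι → Measure α)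
    [∀ i, SigmaFinite (μ i)] {i : ι} {g : (ι → α) → ℝ≥0∞} (hgm : Measurable g)
    (hg : ∀ x t, g (Function.update x i t) = g x) {s : Finset ι} (hi : i ∉ s) (x : ι → α) (t : α) :
    (∫⋯∫⁻_s, g ∂μ) (Function.update x i t) = (∫⋯∫⁻_s, g ∂μ) x := by
  rw [lmarginal_update_of_notMem hgm hi]
  exact congrArg (fun g => (∫⋯∫⁻_s, g ∂μ) x) (funext fun y => hg y t)

variable {ι α : Type*} [Fintype ι] {f g : ι → ℝ≥0∞}

/-- The geometric mean of a finite family in `[0, ∞]`. -/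
def geomMean (f : ι → ℝ≥0∞) : ℝ≥0∞ := ∏ i, f i ^ (Fintype.card ι : ℝ)⁻¹

lemma geomMean_mono (h : f ≤ g) : geomMean f ≤ geomMean g :=
  Finset.prod_le_prod' fun i _ => ENNReal.rpow_le_rpow (h i) (by positivity)

lemma geomMean_mul : geomMean (f * g) = geomMean f * geomMean g := by
  simp only [geomMean, Pi.mul_apply, Finset.prod_mul_distrib,
    ENNReal.mul_rpow_of_nonneg _ _ (inv_nonneg.2 (Nat.cast_nonneg _))]

lemma geomMean_const [Nonempty ι] (a : ℝ≥0∞) : geomMean (fun _ : ι => a) = a := by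
  rw [geomMean, Finset.prod_const, Finset.card_univ, ← ENNReal.rpow_natCast, ← ENNReal.rpow_mul,
    inv_mul_cancel₀ (by simp), ENNReal.rpow_one]

lemma geomMean_ne_top (h : ∀ i, f i ≠ ∞) : geomMean f ≠ ∞ :=
  ENNReal.prod_ne_top fun i _ => ENNReal.rpow_ne_top_of_nonneg (by positivity) (h i)

variable [DecidableEq ι]

lemma lintegral_mul_prod_erase_le [MeasurableSpace α] {μ : Measure α} {u : α → ℝ≥0∞}
    (hu : Measurable u) {v : ι → α → ℝ≥0∞} (hv : ∀ i, Measurable (v i)) (j : ι) (c : ℝ≥0∞) :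
    ∫⁻ t, u t ^ (Fintype.card ι : ℝ)⁻¹ * geomMean (Function.update (v · t) j c) ∂μ ≤
      (∫⁻ t, u t ∂μ) ^ (Fintype.card ι : ℝ)⁻¹ *
        geomMean (Function.update (fun i => ∫⁻ t, v i t ∂μ) j c) := by
  have : Nonempty ι := ⟨j⟩
  set p : ℝ := (Fintype.card ι : ℝ)⁻¹
  have hp0 : 0 ≤ p := by positivity
  have hp1 : p + ∑ _i ∈ Finset.univ.erase j, p = 1 := by
    rw [Finset.add_sum_erase _ (fun _ => p) (Finset.mem_univ j)]
    simp [p]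
  have hsplit (w : ι → ℝ≥0∞) : geomMean (Function.update w j c) =
      c ^ p * ∏ i ∈ Finset.univ.erase j, w i ^ p := by
    rw [geomMean, ← Finset.mul_prod_erase _ _ (Finset.mem_univ j), Function.update_self]
    exact congrArg _ (Finset.prod_congr rfl fun i hi => by
      rw [Function.update_of_ne (Finset.ne_of_mem_erase hi)])
  have hmeas : Measurable fun t => u t ^ p * ∏ i ∈ Finset.univ.erase j, v i t ^ p :=
    (hu.pow_const p).mul (Finset.measurable_fun_prod _ fun i _ => (hv i).pow_const p)
  simp_rw [hsplit, mul_left_comm _ (c ^ p)]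
  rw [lintegral_const_mul _ hmeas]
  gcongr
  exact ENNReal.lintegral_mul_prod_norm_pow_le _ hu.aemeasurable (fun i _ => (hv i).aemeasurable)
    p hp1 hp0 fun _ _ => hp0

/-- A weighted Loomis–Whitney inequality. -/
lemma lmarginal_rpow_mul_geomMean_le [MeasurableSpace α] (μ : ι → Measure α)
    [∀ i, SigmaFinite (μ i)] {h : (ι → α) → ℝ≥0∞} (hh : Measurable h)
    {g : ι → (ι → α) → ℝ≥0∞} (hgm : ∀ i, Measurable (g i))
    (hg : ∀ i x t, g i (Function.update x i t) = g i x) (s : Finset ι) (x : ι → α) :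
    (∫⋯∫⁻_s, (fun y => h y ^ (Fintype.card ι : ℝ)⁻¹ * geomMean (g · y)) ∂μ) x ≤
      (∫⋯∫⁻_s, h ∂μ) x ^ (Fintype.card ι : ℝ)⁻¹ *
        geomMean fun i => (∫⋯∫⁻_s.erase i, g i ∂μ) x := by
  induction s using Finset.induction generalizing x with
  | empty => simp
  | insert j s hj ih =>
    have hm : Measurable fun y => h y ^ (Fintype.card ι : ℝ)⁻¹ * geomMean (g · y) :=
      (hh.pow_const _).mul (Finset.measurable_fun_prod _ fun i _ => (hgm i).pow_const _)
    have hcomp (s : Finset ι) {f : (ι → α) → ℝ≥0∞} (hf : Measurable f) :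
        Measurable fun t => (∫⋯∫⁻_s, f ∂μ) (Function.update x j t) :=
      (hf.lmarginal μ).comp (measurable_update x)
    have hj_const (t : α) : (fun i => (∫⋯∫⁻_s.erase i, g i ∂μ) (Function.update x j t)) =
        Function.update (fun i => (∫⋯∫⁻_s.erase i, g i ∂μ) (Function.update x j t)) j
          ((∫⋯∫⁻_s, g j ∂μ) x) := by
      refine (Function.eq_update_iff.2 ⟨?_, fun _ _ => rfl⟩)
      rw [Finset.erase_eq_of_notMem hj, lmarginal_update_self μ (hgm j) (hg j) hj]
    have herase : Function.update
        (fun i => ∫⁻ t, (∫⋯∫⁻_s.erase i, g i ∂μ) (Function.update x j t) ∂μ j) j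
          ((∫⋯∫⁻_s, g j ∂μ) x) = fun i => (∫⋯∫⁻_(insert j s).erase i, g i ∂μ) x := by
      refine (Function.update_eq_iff.2 ⟨by rw [Finset.erase_insert hj], fun i hi => ?_⟩)
      rw [Finset.erase_insert_of_ne hi.symm, lmarginal_insert _ (hgm i)
        fun hmem => hj (Finset.mem_of_mem_erase hmem)]
    rw [lmarginal_insert _ hm hj, lmarginal_insert _ hh hj, ← herase]
    refine (lintegral_mono fun t => (ih (Function.update x j t)).trans_eq
      (congrArg (_ * geomMean ·) (hj_const t))).trans ?_
    exact lintegral_mul_prod_erase_le (hcomp s hh) (fun i => hcomp _ (hgm i)) j _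

lemma sum_rpow_mul_geomMean_le [Fintype α] [Nonempty α] (h : (ι → α) → ℝ≥0∞)
    (g : ι → (ι → α) → ℝ≥0∞) (hg : ∀ i x t, g i (Function.update x i t) = g i x) :
    ∑ x, h x ^ (Fintype.card ι : ℝ)⁻¹ * geomMean (g · x) ≤
      (∑ x, h x) ^ (Fintype.card ι : ℝ)⁻¹ *
        geomMean fun i => (Fintype.card α : ℝ≥0∞)⁻¹ * ∑ x, g i x := by
  let _ : MeasurableSpace α := ⊤
  let μ : ι → Measure α := fun _ => Measure.count
  have hsum (f : (ι → α) → ℝ≥0∞) (x : ι → α) :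
      (∫⋯∫⁻_Finset.univ, f ∂μ) x = ∑ x, f x := by
    rw [lmarginal_univ, lintegral_fintype]
    simp [Measure.pi_singleton, μ]
  have herase (i : ι) (x : ι → α) : (∫⋯∫⁻_Finset.univ.erase i, g i ∂μ) x =
      (Fintype.card α : ℝ≥0∞)⁻¹ * ∑ x, g i x := by
    rw [← hsum _ x, lmarginal_erase _ (measurable_of_finite _) (Finset.mem_univ i)]
    simp_rw [lmarginal_update_self μ (measurable_of_finite _) (hg i) (Finset.notMem_erase _ _)]
    rw [lintegral_const, Measure.count_univ, ENat.card_eq_coe_fintype_card, mul_comm, mul_assoc]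
    simp [ENNReal.mul_inv_cancel]
  have key := lmarginal_rpow_mul_geomMean_le μ (measurable_of_finite h)
    (fun i => measurable_of_finite (g i)) hg Finset.univ (fun _ => Classical.arbitrary α)
  simpa only [hsum, herase] using key

end LoomisWhitney

section Kakeya

variable {ι : Type*} {M : ℕ} {i : ι}

/-- The index of the half-open cube of side length `M⁻ᵏ` which contains `x`. -/
def cubeIndex (M k : ℕ) (x : ι → ℝ) : ι → ℤ := fun j => ⌊(M : ℝ) ^ k * x j⌋

lemma measurable_cubeIndex [Countable ι] (M k : ℕ) :
    Measurable (cubeIndex M k : (ι → ℝ) → ι → ℤ) := by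
  unfold cubeIndex
  fun_prop

lemma abs_floor_sub_floor_le_one {a b : ℝ} (h : |a - b| ≤ 1) : |⌊a⌋ - ⌊b⌋| ≤ 1 := by
  rw [abs_le] at h ⊢
  have hab : ⌊a⌋ ≤ ⌊b⌋ + 1 := by rw [← Int.floor_add_one]; exact Int.floor_le_floor (by linarith)
  have hba : ⌊b⌋ ≤ ⌊a⌋ + 1 := by rw [← Int.floor_add_one]; exact Int.floor_le_floor (by linarith)
  omega

lemma abs_cubeIndex_sub_le_one {k : ℕ} {x y : ι → ℝ} {j : ι}
    (h : (M : ℝ) ^ k * |x j - y j| ≤ 1) : |cubeIndex M k x j - cubeIndex M k y j| ≤ 1 := by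
  refine abs_floor_sub_floor_le_one ?_
  rwa [← mul_sub, abs_mul, abs_of_nonneg (by positivity)]

lemma abs_sub_le_of_cubeIndex_eq {k : ℕ} {x y : ι → ℝ}
    (h : cubeIndex M k x = cubeIndex M k y) (j : ι) : (M : ℝ) ^ k * |x j - y j| ≤ 1 := by
  have := Int.abs_sub_lt_one_of_floor_eq_floor (congrFun h j)
  rw [← mul_sub, abs_mul, abs_of_nonneg (by positivity)] at this
  exact this.le

/-- The half-open cube of side length `M⁻ᵏ` with index `q`. -/
def cube (M k : ℕ) (q : ι → ℤ) : Set (ι → ℝ) := cubeIndex M k ⁻¹' {q}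

lemma measurableSet_cube [Countable ι] (k : ℕ) (q : ι → ℤ) : MeasurableSet (cube M k q) :=
  measurable_cubeIndex M k (measurableSet_singleton q)

lemma ediam_cube_le [Fintype ι] (hM : M ≠ 0) (k : ℕ) (q : ι → ℤ) :
    ediam (cube M k q) ≤ (M : ℝ≥0∞)⁻¹ ^ k := by
  refine ediam_le fun x hx y hy => (edist_pi_le_iff).2 fun j => ?_
  have hM' : (0 : ℝ) < M := by exact_mod_cast Nat.pos_of_ne_zero hM
  have hle := abs_sub_le_of_cubeIndex_eq (hx.trans hy.symm) j
  rw [← ENNReal.ofReal_natCast, ← ENNReal.ofReal_inv_of_pos hM',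
    ← ENNReal.ofReal_pow (by positivity), edist_dist, Real.dist_eq]
  refine ENNReal.ofReal_le_ofReal ?_
  rwa [inv_pow, ← one_div, le_div_iff₀' (by positivity)]

/-- The index of the `M`-adic cube of the previous level containing the cube with index `q`. -/
def cubeParent (M : ℕ) (q : ι → ℤ) : ι → ℤ := fun j => q j / M

/-- The index of the `a`-th among the `M ^ n` subcubes of the next level of the cube with
index `q`. -/
def cubeChild (q : ι → ℤ) (a : ι → Fin M) : ι → ℤ := fun j => q j * M + (a j : ℕ)

section

variable [NeZero M]

lemma cubeParent_cubeIndex (k : ℕ) (x : ι → ℝ) :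
    cubeParent M (cubeIndex M (k + 1) x) = cubeIndex M k x := by
  ext j
  have : (M : ℝ) ≠ 0 := NeZero.ne _
  rw [cubeParent, cubeIndex, cubeIndex, ← Int.floor_div_natCast]
  congr 1
  rw [pow_succ]
  field_simp

lemma cubeParent_iterate_cubeIndex (k l : ℕ) (x : ι → ℝ) :
    (cubeParent M)^[k] (cubeIndex M (l + k) x) = cubeIndex M l x := by
  induction k with
  | zero => rfl
  | succ k ih => rw [Function.iterate_succ_apply, ← add_assoc, cubeParent_cubeIndex, ih]

lemma cubeParent_cubeChild (q : ι → ℤ) (a : ι → Fin M) : cubeParent M (cubeChild q a) = q :=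
  funext fun j => congrArg Prod.fst ((Int.divModEquiv M).apply_symm_apply (q j, a j))

lemma exists_cubeChild_cubeParent (q : ι → ℤ) :
    ∃ a : ι → Fin M, cubeChild (cubeParent M q) a = q :=
  ⟨fun j => (Int.divModEquiv M (q j)).2, funext fun j => (Int.divModEquiv M).symm_apply_apply (q j)⟩

lemma cube_cubeChild_subset (k : ℕ) (q : ι → ℤ) (a : ι → Fin M) :
    cube M (k + 1) (cubeChild q a) ⊆ cube M k q := fun x hx => by
  rw [cube, mem_preimage, mem_singleton_iff] at hx ⊢
  rw [← cubeParent_cubeIndex, hx, cubeParent_cubeChild]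

end

/-- The column in direction `i`, made of children of the cube of level `k` with index `q`, which
contains the `a`-th child. -/
def column (k : ℕ) (q : ι → ℤ) (i : ι) (a : ι → Fin M) : Set (ι → ℝ) :=
  {x ∈ cube M k q | ∀ j ≠ i, cubeIndex M (k + 1) x j = cubeChild q a j}

lemma column_update [DecidableEq ι] (k : ℕ) (q : ι → ℤ) (a : ι → Fin M) (t : Fin M) :
    column k q i (Function.update a i t) = column k q i a := by
  ext x
  refine and_congr_right fun _ => forall₂_congr fun j hj => ?_
  rw [cubeChild, cubeChild, Function.update_of_ne hj]

lemma cube_cubeChild_subset_column [NeZero M] (k : ℕ) (q : ι → ℤ) (a : ι → Fin M) :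
    cube M (k + 1) (cubeChild q a) ⊆ column k q i a := fun _ hx =>
  ⟨cube_cubeChild_subset k q a hx, fun j _ => congrFun hx j⟩

/-- `Z` is contained in the graph of an `M⁻¹`-Lipschitz map over the `i`-th coordinate axis. -/
def IsNarrow (M : ℕ) (i : ι) (Z : Set (ι → ℝ)) : Prop :=
  ∀ x ∈ Z, ∀ y ∈ Z, ∀ j ≠ i, M * |x j - y j| ≤ |x i - y i|

lemma IsNarrow.abs_cubeIndex_sub_le_one {Z : Set (ι → ℝ)} (hZ : IsNarrow M i Z) {k : ℕ}
    {q : ι → ℤ} {x y : ι → ℝ} (hx : x ∈ Z ∩ cube M k q) (hy : y ∈ Z ∩ cube M k q) {j : ι}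
    (hj : j ≠ i) : |cubeIndex M (k + 1) x j - cubeIndex M (k + 1) y j| ≤ 1 := by
  refine BKO.abs_cubeIndex_sub_le_one ?_
  calc (M : ℝ) ^ (k + 1) * |x j - y j| = M ^ k * (M * |x j - y j|) := by ring
    _ ≤ M ^ k * |x i - y i| := by gcongr; exact hZ x hx.1 y hy.1 j hj
    _ ≤ 1 := abs_sub_le_of_cubeIndex_eq (hx.2.trans hy.2.symm) i

lemma card_filter_abs_sub_le_one (b c : ℤ) :
    (Finset.univ.filter fun t : Fin M => |b + (t : ℕ) - c| ≤ 1).card ≤ 3 := by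
  calc _ ≤ (Finset.Icc (c - 1) (c + 1)).card := by
        refine Finset.card_le_card_of_injOn (fun t : Fin M => b + (t : ℕ)) (fun t ht => ?_)
          fun t _ t' _ h => Fin.ext (by simpa using h)
        have := abs_le.1 (Finset.mem_filter.1 ht).2
        simp only [Finset.coe_Icc, Set.mem_Icc]
        omega
    _ = 3 := by rw [Int.card_Icc]; omega

variable [Fintype ι]

open Classical in
lemma IsNarrow.card_columns_le [DecidableEq ι] {Z : Set (ι → ℝ)} (hZ : IsNarrow M i Z) (k : ℕ)
    (q : ι → ℤ) :
    (Finset.univ.filter fun a : ι → Fin M => (Z ∩ column k q i a).Nonempty).card ≤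
      3 ^ Fintype.card ι * M := by
  rcases (Z ∩ cube M k q).eq_empty_or_nonempty with hempty | ⟨z₀, hz₀⟩
  · rw [Finset.filter_false_of_mem fun a _ ⟨z, hz, hq, _⟩ => hempty.subset ⟨hz, hq⟩]
    exact Nat.zero_le _
  let T (j : ι) : Finset (Fin M) := if j = i then Finset.univ else
    Finset.univ.filter fun t : Fin M => |q j * M + (t : ℕ) - cubeIndex M (k + 1) z₀ j| ≤ 1
  have hT (j : ι) : (T j).card ≤ 3 * if j = i then M else 1 := by
    by_cases hj : j = i
    · simp [T, hj]; omega
    · simpa only [T, hj, if_false, mul_one] using card_filter_abs_sub_le_one _ _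
  calc _ ≤ (Fintype.piFinset T).card := by
        refine Finset.card_le_card fun a ha => Fintype.mem_piFinset.2 fun j => ?_
        obtain ⟨z, hz, hq, ha⟩ := (Finset.mem_filter.1 ha).2
        by_cases hj : j = i
        · simp [T, hj]
        · have := hZ.abs_cubeIndex_sub_le_one ⟨hz, hq⟩ hz₀ hj
          rw [ha j hj] at this
          simpa [T, hj, cubeChild] using this
    _ = ∏ j, (T j).card := Fintype.card_piFinset T
    _ ≤ ∏ j, 3 * (if j = i then M else 1) := Finset.prod_le_prod' fun j _ => hT j
    _ = 3 ^ Fintype.card ι * M := by rw [Finset.prod_mul_distrib]; simp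

section HitMass

variable {Ω α κ : Type*} [MeasurableSpace Ω] {P : Measure Ω} {Z : Ω → Set α}

/-- The `P`-measure of the set of all `ω` such that `Z ω` meets `A`, measured from inside: the
lower integral is superadditive also for non-measurable events. -/
def hitMass (P : Measure Ω) (Z : Ω → Set α) (A : Set α) : ℝ≥0∞ :=
  ∫⁻ ω, {ω | (Z ω ∩ A).Nonempty}.indicator 1 ω ∂P

lemma hitMass_mono {A B : Set α} (h : A ⊆ B) : hitMass P Z A ≤ hitMass P Z B :=
  lintegral_mono fun ω => indicator_le_indicator_of_subset
    (fun _ hω => hω.mono (inter_subset_inter_right _ h)) (fun _ => zero_le) ω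

lemma hitMass_le (P : Measure Ω) (Z : Ω → Set α) (A : Set α) : hitMass P Z A ≤ P univ := by
  rw [← lintegral_one]
  exact lintegral_mono fun ω => indicator_le_self' (fun _ _ => zero_le) ω

lemma sum_lintegral_le_lintegral_sum (s : Finset κ) (f : κ → Ω → ℝ≥0∞) :
    ∑ a ∈ s, ∫⁻ ω, f a ω ∂P ≤ ∫⁻ ω, ∑ a ∈ s, f a ω ∂P := by
  classical
  induction s using Finset.induction with
  | empty => simp
  | insert a s ha ih =>
    simp_rw [Finset.sum_insert ha]
    exact (add_le_add_right ih _).trans (le_lintegral_add _ _)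

open Classical in
lemma sum_hitMass_le [Fintype κ] {A : κ → Set α} {B : Set α} (hAB : ∀ a, A a ⊆ B) {N : ℕ}
    (hN : ∀ ω, (Finset.univ.filter fun a => (Z ω ∩ A a).Nonempty).card ≤ N) :
    ∑ a, hitMass P Z (A a) ≤ N * hitMass P Z B := by
  refine (sum_lintegral_le_lintegral_sum _ _).trans ?_
  rw [hitMass, ← lintegral_const_mul' _ _ (ENNReal.natCast_ne_top _)]
  refine lintegral_mono fun ω => ?_
  simp only [indicator_apply, Pi.one_apply, Set.mem_ofPred_eq, Finset.sum_boole]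
  split_ifs with h
  · simpa using hN ω
  · simp [show ∀ a, ¬(Z ω ∩ A a).Nonempty from
      fun a ha => h (ha.mono (inter_subset_inter_right _ (hAB a)))]

end HitMass

variable {Ω : ι → Type*} [∀ i, MeasurableSpace (Ω i)] {P : ∀ i, Measure (Ω i)}
  {Z : ∀ i, Ω i → Set (ι → ℝ)}

/-- The multilinear quantity of the Kakeya inequality: the geometric mean over all directions `i`
of the mass of those `Z i ω` which meet `A`. -/
def meanHit (P : ∀ i, Measure (Ω i)) (Z : ∀ i, Ω i → Set (ι → ℝ)) (A : Set (ι → ℝ)) : ℝ≥0∞ :=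
  geomMean fun i => hitMass (P i) (Z i) A

lemma meanHit_ne_top [∀ i, IsFiniteMeasure (P i)] (A : Set (ι → ℝ)) : meanHit P Z A ≠ ∞ :=
  geomMean_ne_top fun i => ((hitMass_le (P i) (Z i) A).trans_lt (measure_lt_top _ _)).ne

variable [NeZero M]

lemma inv_mul_sum_hitMass_column_le [DecidableEq ι] {Ω : Type*} [MeasurableSpace Ω] {P : Measure Ω}
    {Z : Ω → Set (ι → ℝ)} (hZ : ∀ ω, IsNarrow M i (Z ω)) (k : ℕ) (q : ι → ℤ) :
    (M : ℝ≥0∞)⁻¹ * ∑ a : ι → Fin M, hitMass P Z (column k q i a) ≤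
      3 ^ Fintype.card ι * hitMass P Z (cube M k q) := by
  calc (M : ℝ≥0∞)⁻¹ * ∑ a : ι → Fin M, hitMass P Z (column k q i a)
      ≤ (M : ℝ≥0∞)⁻¹ * ((3 ^ Fintype.card ι * M : ℕ) * hitMass P Z (cube M k q)) := by
        gcongr
        exact sum_hitMass_le (fun _ => sep_subset _ _) fun ω => (hZ ω).card_columns_le k q
    _ = ((M : ℝ≥0∞)⁻¹ * M) * (3 ^ Fintype.card ι * hitMass P Z (cube M k q)) := by
        push_cast; ring
    _ = 3 ^ Fintype.card ι * hitMass P Z (cube M k q) := by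
        rw [ENNReal.inv_mul_cancel (NeZero.ne _) (ENNReal.natCast_ne_top M), one_mul]

variable [Nonempty ι]

lemma sum_cubeChild_meanHit_le [DecidableEq ι] (hZ : ∀ i ω, IsNarrow M i (Z i ω))
    (h : (ι → Fin M) → ℝ≥0∞) (k : ℕ) (q : ι → ℤ) :
    ∑ a, h a ^ (Fintype.card ι : ℝ)⁻¹ * meanHit P Z (cube M (k + 1) (cubeChild q a)) ≤
      3 ^ Fintype.card ι * (∑ a, h a) ^ (Fintype.card ι : ℝ)⁻¹ * meanHit P Z (cube M k q) := by
  let g (i : ι) (a : ι → Fin M) : ℝ≥0∞ := hitMass (P i) (Z i) (column k q i a)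
  calc ∑ a, h a ^ (Fintype.card ι : ℝ)⁻¹ * meanHit P Z (cube M (k + 1) (cubeChild q a))
      ≤ ∑ a, h a ^ (Fintype.card ι : ℝ)⁻¹ * geomMean (g · a) := by
        gcongr with a
        exact geomMean_mono fun i => hitMass_mono (cube_cubeChild_subset_column k q a)
    _ ≤ (∑ a, h a) ^ (Fintype.card ι : ℝ)⁻¹ *
          geomMean fun i => (Fintype.card (Fin M) : ℝ≥0∞)⁻¹ * ∑ a, g i a :=
        sum_rpow_mul_geomMean_le h g fun i a t => by simp only [g, column_update]
    _ ≤ (∑ a, h a) ^ (Fintype.card ι : ℝ)⁻¹ *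
          geomMean ((fun _ => 3 ^ Fintype.card ι) * fun i => hitMass (P i) (Z i) (cube M k q)) := by
        gcongr
        refine geomMean_mono fun i => ?_
        rw [Fintype.card_fin]
        exact inv_mul_sum_hitMass_column_le (hZ i) k q
    _ = _ := by rw [geomMean_mul, geomMean_const, meanHit, mul_left_comm, mul_assoc]

/-- A multiscale multilinear Kakeya inequality. -/
lemma sum_meanHit_cube_le (hZ : ∀ i ω, IsNarrow M i (Z i ω)) (k l : ℕ) (q : ι → ℤ)
    (S : Finset (ι → ℤ)) (hS : ∀ Q ∈ S, (cubeParent M)^[k] Q = q) :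
    ∑ Q ∈ S, meanHit P Z (cube M (l + k) Q) ≤
      (3 ^ Fintype.card ι) ^ k * (S.card : ℝ≥0∞) ^ (Fintype.card ι : ℝ)⁻¹ *
        meanHit P Z (cube M l q) := by
  classical
  induction k generalizing l q S with
  | zero =>
    rcases Finset.subset_singleton_iff.1 (fun Q hQ => Finset.mem_singleton.2 (hS Q hQ)) with
      rfl | rfl <;> simp
  | succ k ih =>
    choose digit hdigit using exists_cubeChild_cubeParent (ι := ι) (M := M)
    let a (Q : ι → ℤ) : ι → Fin M := digit ((cubeParent M)^[k] Q)
    have ha : ∀ Q ∈ S, (cubeParent M)^[k] Q = cubeChild q (a Q) := fun Q hQ => by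
      rw [← hS Q hQ, Function.iterate_succ_apply', hdigit]
    let N (b : ι → Fin M) : ℝ≥0∞ := (S.filter fun Q => a Q = b).card
    have hN : ∑ b, N b = S.card := by
      rw [← Nat.cast_sum, Finset.sum_card_fiberwise_eq_card_filter]
      simp
    calc ∑ Q ∈ S, meanHit P Z (cube M (l + (k + 1)) Q)
        = ∑ b, ∑ Q ∈ S.filter fun Q => a Q = b, meanHit P Z (cube M (l + 1 + k) Q) := by
          rw [Finset.sum_fiberwise, add_right_comm, add_assoc]
      _ ≤ ∑ b, (3 ^ Fintype.card ι) ^ k * N b ^ (Fintype.card ι : ℝ)⁻¹ *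
            meanHit P Z (cube M (l + 1) (cubeChild q b)) := by
          refine Finset.sum_le_sum fun b _ => ih _ _ _ fun Q hQ => ?_
          obtain ⟨hQS, rfl⟩ := Finset.mem_filter.1 hQ
          exact ha Q hQS
      _ ≤ (3 ^ Fintype.card ι) ^ k * (3 ^ Fintype.card ι *
            (∑ b, N b) ^ (Fintype.card ι : ℝ)⁻¹ * meanHit P Z (cube M l q)) := by
          simp_rw [mul_assoc ((3 ^ Fintype.card ι : ℝ≥0∞) ^ k)]
          rw [← Finset.mul_sum]
          gcongr
          exact sum_cubeChild_meanHit_le hZ _ l q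
      _ = _ := by rw [hN, pow_succ]; ring

end Kakeya

section Hausdorff

lemma exists_cover_of_hausdorffMeasure_eq_zero {α : Type*} [EMetricSpace α] [MeasurableSpace α]
    [BorelSpace α] {s : ℝ} (hs : 0 < s) {E : Set α} (hE : μH[s] E = 0) {r : ℝ≥0∞} (hr : r ≠ 0) :
    ∃ (t : ℕ → Set α) (b : ℕ → ℝ≥0∞), E ⊆ ⋃ j, t j ∧
      (∀ j, ediam (t j) ≤ b j ∧ b j ≠ 0 ∧ b j ≤ r) ∧ ∑' j, b j ^ s ≤ 2 := by
  rw [Measure.hausdorffMeasure_apply] at hE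
  have hlt := ((le_iSup₂ (f := fun (r : ℝ≥0∞) (_ : 0 < r) =>
    ⨅ (t : ℕ → Set α) (_ : E ⊆ ⋃ n, t n) (_ : ∀ n, ediam (t n) ≤ r),
      ∑' n, ⨆ _ : (t n).Nonempty, ediam (t n) ^ s) r (pos_iff_ne_zero.2 hr)).trans
        hE.le).trans_lt one_pos
  simp only [iInf_lt_iff] at hlt
  obtain ⟨t, htE, htr, hsum⟩ := hlt
  let ε (j : ℕ) : ℝ≥0∞ := min r ((2⁻¹ ^ (j + 1)) ^ s⁻¹)
  have hε (j : ℕ) : ε j ^ s ≤ 2⁻¹ ^ (j + 1) := by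
    refine (ENNReal.rpow_le_rpow (min_le_right _ _) hs.le).trans_eq ?_
    rw [← ENNReal.rpow_mul, inv_mul_cancel₀ hs.ne', ENNReal.rpow_one]
  refine ⟨t, fun j => max (ediam (t j)) (ε j), htE, fun j => ⟨le_max_left _ _, ?_,
    max_le (htr j) (min_le_left _ _)⟩, ?_⟩
  · refine ((pos_iff_ne_zero.2 ?_).trans_le (le_max_right _ _)).ne'
    simp [ε, hr, ENNReal.rpow_eq_zero_iff]
  · calc ∑' j, max (ediam (t j)) (ε j) ^ s
        ≤ ∑' j, ((⨆ _ : (t j).Nonempty, ediam (t j) ^ s) + 2⁻¹ ^ (j + 1)) := by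
          refine ENNReal.tsum_le_tsum fun j => ?_
          rw [(ENNReal.monotone_rpow_of_nonneg hs.le).map_max]
          refine max_le (le_add_right ?_) ((hε j).trans le_add_self)
          rcases (t j).eq_empty_or_nonempty with h | h
          · simp [h, hs]
          · exact le_iSup (fun _ : (t j).Nonempty => ediam (t j) ^ s) h
      _ ≤ 1 + 1 := by
          rw [ENNReal.tsum_add]
          refine add_le_add hsum.le ?_
          rw [ENNReal.tsum_geometric_add_one, ENNReal.one_sub_inv_two, inv_inv,
            ENNReal.inv_mul_cancel (by simp) (by simp)]
      _ = 2 := one_add_one_eq_two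

lemma exists_pow_succ_lt_and_le_pow {a b : ℝ≥0∞} (ha : a < 1) (hb : b ≠ 0) {k₀ : ℕ}
    (h : b ≤ a ^ k₀) : ∃ k ≥ k₀, a ^ (k + 1) < b ∧ b ≤ a ^ k := by
  by_contra! hcon
  have hle (k : ℕ) (hk : k₀ ≤ k) : b ≤ a ^ k :=
    Nat.le_induction h (fun k hk ih => not_lt.1 fun hlt => (hcon k hk hlt).not_ge ih) k hk
  exact hb (nonpos_iff_eq_zero.1 (ge_of_tendsto
    (ENNReal.tendsto_pow_atTop_nhds_zero_of_lt_one ha) (eventually_atTop.2 ⟨k₀, hle⟩)))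

lemma exists_finset_fiber_card_le {β γ : Type*} {f : β → γ} {w : γ → ℝ≥0∞} {c : ℝ≥0∞}
    (hc : c ≠ ∞) (hsum : ∑' j, w (f j) ≤ c) {k : γ} (hk : w k ≠ 0) :
    ∃ J : Finset β, (∀ j, j ∈ J ↔ f j = k) ∧ (J.card : ℝ≥0∞) ≤ c / w k := by
  classical
  obtain ⟨hfin, hcard⟩ := ENNReal.finset_card_const_le_le_of_tsum_le hc hsum hk
  refine ⟨hfin.toFinset.filter fun j => f j = k, fun j => ?_,
    (Nat.cast_le.2 (Finset.card_filter_le _ _)).trans hcard⟩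
  rw [Finset.mem_filter, and_iff_right_iff_imp, Finite.mem_toFinset]
  exact fun hj => (congrArg w hj).ge

variable {ι : Type*} [Fintype ι] {M : ℕ}

lemma exists_finset_cubeIndex_mem (hM : M ≠ 0) (k : ℕ) {U : Set (ι → ℝ)}
    (hU : ediam U ≤ (M : ℝ≥0∞)⁻¹ ^ k) :
    ∃ T : Finset (ι → ℤ), T.card ≤ 3 ^ Fintype.card ι ∧ ∀ z ∈ U, cubeIndex M k z ∈ T := by
  classical
  rcases U.eq_empty_or_nonempty with rfl | ⟨z₀, hz₀⟩
  · exact ⟨∅, by simp, by simp⟩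
  have hM0 : (M : ℝ) ≠ 0 := Nat.cast_ne_zero.2 hM
  have hdist (z) (hz : z ∈ U) : dist z z₀ ≤ (M : ℝ)⁻¹ ^ k := by
    have := ENNReal.toReal_mono (ENNReal.pow_ne_top (by simpa using hM))
      ((edist_le_ediam_of_mem hz hz₀).trans hU)
    simpa [edist_dist] using this
  let c := cubeIndex M k z₀
  refine ⟨Finset.Icc (c - 1) (c + 1), ?_, fun z hz => Finset.mem_Icc.2 ?_⟩
  · have (j : ι) : (c j + 1 + 1 - (c j - 1)).toNat = 3 := by omega
    simp [Pi.card_Icc, this]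
  · have h (j : ι) : |cubeIndex M k z j - c j| ≤ 1 := by
      refine abs_cubeIndex_sub_le_one ?_
      calc (M : ℝ) ^ k * |z j - z₀ j| ≤ M ^ k * ((M : ℝ)⁻¹) ^ k := by
            gcongr
            exact (dist_le_pi_dist z z₀ j).trans (hdist z hz)
        _ = 1 := by rw [← mul_pow, mul_inv_cancel₀ hM0, one_pow]
    constructor <;> intro j <;> have := abs_le.1 (h j) <;>
      simp only [Pi.sub_apply, Pi.add_apply, Pi.one_apply] <;> omega

lemma exists_cubes_of_hausdorffMeasure_eq_zero (hM : 1 < M) {s : ℝ} (hs : 0 < s)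
    {E : Set (ι → ℝ)} (hE : μH[s] E = 0) (k₀ : ℕ) :
    ∃ S : ℕ → Finset (ι → ℤ),
      (∀ k, ((S k).card : ℝ≥0∞) ≤
        3 ^ Fintype.card ι * (2 * (M : ℝ≥0∞) ^ s) * ((M : ℝ≥0∞) ^ s) ^ k) ∧
      ∀ z ∈ E, ∃ k ≥ k₀, cubeIndex M k z ∈ S k := by
  classical
  have hM0 : M ≠ 0 := by omega
  have hlt : (M : ℝ≥0∞)⁻¹ < 1 := ENNReal.inv_lt_one.2 (Nat.one_lt_cast.2 hM)
  have hMs (k : ℕ) : ((M : ℝ≥0∞)⁻¹ ^ k) ^ s = (((M : ℝ≥0∞) ^ s) ^ k)⁻¹ := by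
    rw [← ENNReal.inv_pow, ENNReal.inv_rpow, ← ENNReal.rpow_natCast, ← ENNReal.rpow_mul,
      mul_comm, ENNReal.rpow_mul, ENNReal.rpow_natCast]
  have hMst : (M : ℝ≥0∞) ^ s ≠ ∞ :=
    ENNReal.rpow_ne_top_of_nonneg hs.le (ENNReal.natCast_ne_top M)
  obtain ⟨t, b, htE, hb, hsum⟩ := exists_cover_of_hausdorffMeasure_eq_zero hs hE
    (ENNReal.pow_ne_zero (by simp) k₀ : (M : ℝ≥0∞)⁻¹ ^ k₀ ≠ 0)
  choose level hlevel hlow hup using fun j =>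
    exists_pow_succ_lt_and_le_pow hlt (hb j).2.1 (hb j).2.2
  have hlevel_sum : ∑' j, (((M : ℝ≥0∞) ^ s) ^ (level j + 1))⁻¹ ≤ 2 := by
    refine (ENNReal.tsum_le_tsum fun j => ?_).trans hsum
    rw [← hMs]
    exact ENNReal.rpow_le_rpow (hlow j).le hs.le
  choose T hTcard hT using fun j => exists_finset_cubeIndex_mem hM0 (level j)
    ((hb j).1.trans (hup j))
  choose J hJ hJcard using fun k => exists_finset_fiber_card_le (f := level) (k := k)
    (w := fun k => (((M : ℝ≥0∞) ^ s) ^ (k + 1))⁻¹) (by simp) hlevel_sum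
    (ENNReal.inv_ne_zero.2 (ENNReal.pow_ne_top hMst))
  refine ⟨fun k => (J k).biUnion T, fun k => ?_, fun z hz => ?_⟩
  · calc (((J k).biUnion T).card : ℝ≥0∞) ≤ ((J k).card * 3 ^ Fintype.card ι : ℕ) :=
          Nat.cast_le.2 (Finset.card_biUnion_le_card_mul _ _ _ fun j _ => hTcard j)
      _ ≤ 2 / (((M : ℝ≥0∞) ^ s) ^ (k + 1))⁻¹ * 3 ^ Fintype.card ι := by
          push_cast
          gcongr
          exact hJcard k
      _ = _ := by rw [div_eq_mul_inv, inv_inv, pow_succ]; ring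
  · obtain ⟨j, hj⟩ := mem_iUnion.1 (htE hz)
    exact ⟨level j, hlevel j, Finset.mem_biUnion.2 ⟨j, (hJ _ j).2 rfl, hT j z hj⟩⟩

end Hausdorff

section KakeyaNull

lemma measure_eq_zero_of_summable_covers {α : Type*} [MeasurableSpace α] {m : Measure α}
    {b : ℕ → ℝ≥0∞} (hb : ∑' k, b k ≠ ∞) {F : Set α}
    (hF : ∀ k₀, ∃ A : ℕ → Set α, (∀ k, m (A k) ≤ b k) ∧ F ⊆ ⋃ k ≥ k₀, A k) : m F = 0 := by
  refine nonpos_iff_eq_zero.1 (ge_of_tendsto' (ENNReal.tendsto_sum_nat_add b hb) fun k₀ => ?_)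
  obtain ⟨A, hA, hFA⟩ := hF k₀
  have hsub : F ⊆ ⋃ k, A (k + k₀) := fun x hx => by
    obtain ⟨k, hk, hxk⟩ := mem_iUnion₂.1 (hFA hx)
    exact mem_iUnion.2 ⟨k - k₀, by rwa [Nat.sub_add_cancel hk]⟩
  exact (measure_mono hsub).trans
    ((measure_iUnion_le _).trans (ENNReal.tsum_le_tsum fun k => hA _))

variable {ι : Type*} [Fintype ι] [Nonempty ι] {M : ℕ} {Ω : ι → Type*}
  [∀ i, MeasurableSpace (Ω i)] {P : ∀ i, Measure (Ω i)} {Z : ∀ i, Ω i → Set (ι → ℝ)}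
  {m : Measure (ι → ℝ)} {c : ι → ℝ≥0∞}

lemma measure_cube_le_meanHit (hm : ∀ k q i, m (cube M k q) ≤
      c i * ((M : ℝ≥0∞)⁻¹ ^ k * hitMass (P i) (Z i) (cube M k q))) (k : ℕ) (q : ι → ℤ) :
    m (cube M k q) ≤ geomMean c * ((M : ℝ≥0∞)⁻¹ ^ k * meanHit P Z (cube M k q)) := by
  rw [meanHit, ← geomMean_const (ι := ι) (m (cube M k q)),
    ← geomMean_const (ι := ι) ((M : ℝ≥0∞)⁻¹ ^ k), ← geomMean_mul, ← geomMean_mul]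
  exact geomMean_mono (hm k q)

lemma sum_measure_cube_le [NeZero M] (hZ : ∀ i ω, IsNarrow M i (Z i ω))
    (hm : ∀ k q i, m (cube M k q) ≤
      c i * ((M : ℝ≥0∞)⁻¹ ^ k * hitMass (P i) (Z i) (cube M k q)))
    {k : ℕ} {q : ι → ℤ} {S : Finset (ι → ℤ)} (hS : ∀ Q ∈ S, (cubeParent M)^[k] Q = q) :
    ∑ Q ∈ S, m (cube M k Q) ≤ geomMean c * meanHit P Z (cube M 0 q) *
      (((M : ℝ≥0∞)⁻¹ * 3 ^ Fintype.card ι) ^ k * (S.card : ℝ≥0∞) ^ (Fintype.card ι : ℝ)⁻¹) := by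
  have kakeya := sum_meanHit_cube_le (P := P) hZ k 0 q S hS
  rw [zero_add] at kakeya
  calc ∑ Q ∈ S, m (cube M k Q)
      ≤ ∑ Q ∈ S, geomMean c * ((M : ℝ≥0∞)⁻¹ ^ k * meanHit P Z (cube M k Q)) :=
        Finset.sum_le_sum fun Q _ => measure_cube_le_meanHit hm k Q
    _ = geomMean c * ((M : ℝ≥0∞)⁻¹ ^ k * ∑ Q ∈ S, meanHit P Z (cube M k Q)) := by
        rw [← Finset.mul_sum, ← Finset.mul_sum]
    _ ≤ geomMean c * ((M : ℝ≥0∞)⁻¹ ^ k * ((3 ^ Fintype.card ι) ^ k *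
          (S.card : ℝ≥0∞) ^ (Fintype.card ι : ℝ)⁻¹ * meanHit P Z (cube M 0 q))) := by gcongr
    _ = _ := by rw [mul_pow]; ring

lemma measure_biUnion_cube_le [NeZero M] (hZ : ∀ i ω, IsNarrow M i (Z i ω))
    (hm : ∀ k q i, m (cube M k q) ≤
      c i * ((M : ℝ≥0∞)⁻¹ ^ k * hitMass (P i) (Z i) (cube M k q)))
    {k : ℕ} {q : ι → ℤ} {S : Finset (ι → ℤ)} (hS : ∀ Q ∈ S, (cubeParent M)^[k] Q = q)
    {A : ℝ≥0∞} {s : ℝ} (hcard : (S.card : ℝ≥0∞) ≤ A * ((M : ℝ≥0∞) ^ s) ^ k) :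
    m (⋃ Q ∈ S, cube M k Q) ≤
      geomMean c * meanHit P Z (cube M 0 q) * A ^ (Fintype.card ι : ℝ)⁻¹ *
        ((M : ℝ≥0∞)⁻¹ * (3 ^ Fintype.card ι * (M : ℝ≥0∞) ^ (s / Fintype.card ι))) ^ k := by
  have hp : (0 : ℝ) ≤ (Fintype.card ι : ℝ)⁻¹ := by positivity
  have hroot : (S.card : ℝ≥0∞) ^ (Fintype.card ι : ℝ)⁻¹ ≤
      A ^ (Fintype.card ι : ℝ)⁻¹ * ((M : ℝ≥0∞) ^ (s / Fintype.card ι)) ^ k := by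
    refine (ENNReal.rpow_le_rpow hcard hp).trans_eq ?_
    rw [ENNReal.mul_rpow_of_nonneg _ _ hp]
    simp_rw [← ENNReal.rpow_natCast, ← ENNReal.rpow_mul]
    congr 2
    ring
  calc m (⋃ Q ∈ S, cube M k Q) ≤ ∑ Q ∈ S, m (cube M k Q) := measure_biUnion_finset_le _ _
    _ ≤ geomMean c * meanHit P Z (cube M 0 q) * (((M : ℝ≥0∞)⁻¹ * 3 ^ Fintype.card ι) ^ k *
          (S.card : ℝ≥0∞) ^ (Fintype.card ι : ℝ)⁻¹) := sum_measure_cube_le hZ hm hS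
    _ ≤ geomMean c * meanHit P Z (cube M 0 q) * (((M : ℝ≥0∞)⁻¹ * 3 ^ Fintype.card ι) ^ k *
          (A ^ (Fintype.card ι : ℝ)⁻¹ * ((M : ℝ≥0∞) ^ (s / Fintype.card ι)) ^ k)) := by gcongr
    _ = _ := by simp only [mul_pow]; ring

/-- An `s`-null set has covers using `O(M ^ (s * k))` cubes of level `k`, so that the Kakeya
inequality bounds its measure by the tail of a geometric series. -/
lemma measure_eq_zero_of_hausdorffMeasure_eq_zero [∀ i, IsFiniteMeasure (P i)] (hM : 1 < M)
    (hZ : ∀ i ω, IsNarrow M i (Z i ω)) {s : ℝ} (hs : 0 < s)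
    (hMs : (3 : ℝ≥0∞) ^ Fintype.card ι * (M : ℝ≥0∞) ^ (s / Fintype.card ι) < M)
    (hc : ∀ i, c i ≠ ∞) (hm : ∀ k q i, m (cube M k q) ≤
      c i * ((M : ℝ≥0∞)⁻¹ ^ k * hitMass (P i) (Z i) (cube M k q)))
    {E : Set (ι → ℝ)} (hE : μH[s] E = 0) : m E = 0 := by
  classical
  have : NeZero M := ⟨by omega⟩
  let A : ℝ≥0∞ := 3 ^ Fintype.card ι * (2 * (M : ℝ≥0∞) ^ s)
  have hA : A ≠ ∞ := ENNReal.mul_ne_top (by simp) (ENNReal.mul_ne_top (by simp)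
    (ENNReal.rpow_ne_top_of_nonneg hs.le (ENNReal.natCast_ne_top M)))
  let ρ : ℝ≥0∞ := (M : ℝ≥0∞)⁻¹ * (3 ^ Fintype.card ι * (M : ℝ≥0∞) ^ (s / Fintype.card ι))
  have hρ : ρ < 1 := by
    rw [show ρ = _ from mul_comm _ _, ← div_eq_mul_inv]
    exact (ENNReal.div_lt_iff (by simp [NeZero.ne M]) (by simp)).2 (by rwa [one_mul])
  have hcover : E ⊆ ⋃ q, E ∩ cube M 0 q := fun z hz => mem_iUnion.2 ⟨_, hz, rfl⟩
  refine measure_mono_null hcover (measure_iUnion_null fun q => ?_)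
  let K : ℝ≥0∞ := geomMean c * meanHit P Z (cube M 0 q) * A ^ (Fintype.card ι : ℝ)⁻¹
  have hK : K ≠ ∞ := ENNReal.mul_ne_top (ENNReal.mul_ne_top (geomMean_ne_top hc)
    (meanHit_ne_top _)) (ENNReal.rpow_ne_top_of_nonneg (by positivity) hA)
  refine measure_eq_zero_of_summable_covers (b := fun k => K * ρ ^ k) ?_ fun k₀ => ?_
  · rw [ENNReal.tsum_mul_left, ENNReal.tsum_geometric]
    exact ENNReal.mul_ne_top hK (ENNReal.inv_ne_top.2 (tsub_pos_of_lt hρ).ne')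
  obtain ⟨S, hScard, hS⟩ := exists_cubes_of_hausdorffMeasure_eq_zero hM hs hE k₀
  let S' (k : ℕ) : Finset (ι → ℤ) := (S k).filter fun Q => (cubeParent M)^[k] Q = q
  refine ⟨fun k => ⋃ Q ∈ S' k, cube M k Q, fun k => measure_biUnion_cube_le hZ hm
    (fun Q hQ => (Finset.mem_filter.1 hQ).2)
    ((Nat.cast_le.2 (Finset.card_filter_le _ _)).trans (hScard k)), fun z hz => ?_⟩
  obtain ⟨k, hk, hzk⟩ := hS z hz.1
  have hparent : (cubeParent M)^[k] (cubeIndex M k z) = q := by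
    rw [← hz.2, ← cubeParent_iterate_cubeIndex k 0 z, zero_add]
  exact mem_iUnion₂.2 ⟨k, hk, mem_iUnion₂.2 ⟨_, Finset.mem_filter.2 ⟨hzk, hparent⟩, rfl⟩⟩

end KakeyaNull

section MeasureLattice

variable {α : Type*} [MeasurableSpace α]

lemma exists_measure_inter_eq_zero_of_inf_apply_eq_zero {μ ν : Measure α} {s : Set α}
    (h : (μ ⊓ ν) s = 0) : ∃ t, μ (t ∩ s) = 0 ∧ ν (tᶜ ∩ s) = 0 := by
  set S := toMeasurable (μ ⊓ ν) s
  have hS : MeasurableSet S := measurableSet_toMeasurable _ _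
  have hdisj : μ.restrict S ⊓ ν.restrict S = 0 := by
    rw [← sInf_pair, ← image_pair (fun ρ : Measure α => ρ.restrict S),
      ← Measure.restrict_sInf_eq_sInf_restrict (insert_nonempty _ _) hS, sInf_pair,
      Measure.restrict_eq_zero, measure_toMeasurable, h]
  obtain ⟨t, -, hμ, hν⟩ := Measure.mutuallySingular_of_disjoint (disjoint_iff.2 hdisj)
  rw [Measure.restrict_apply' hS] at hμ hν
  have hsS := subset_toMeasurable (μ ⊓ ν) s
  exact ⟨t, measure_mono_null (inter_subset_inter_right _ hsS) hμ,
    measure_mono_null (inter_subset_inter_right _ hsS) hν⟩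

lemma exists_measure_inter_eq_zero_of_absolutelyContinuous_sum {ι β : Type*} [Countable ι]
    [Countable β] {μ : Measure α} {ν : ι → Measure α} {ρ : β → Measure α}
    (hμ : μ ≪ Measure.sum ν) {s : Set α} (h : ∀ k b, (ν k ⊓ ρ b) s = 0) :
    ∃ t, μ (t ∩ s) = 0 ∧ ∀ b, ρ b (tᶜ ∩ s) = 0 := by
  choose t htν htρ using fun k b => exists_measure_inter_eq_zero_of_inf_apply_eq_zero (h k b)
  refine ⟨⋃ b, ⋂ k, t k b, hμ (Measure.sum_apply_eq_zero.2 fun k => ?_), fun b => ?_⟩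
  · refine measure_mono_null (t := ⋃ b, t k b ∩ s) ?_ (measure_iUnion_null fun b => htν k b)
    rw [← iUnion_inter]
    exact inter_subset_inter_left _ (iUnion_mono fun b => iInter_subset _ k)
  · refine measure_mono_null (t := ⋃ k, (t k b)ᶜ ∩ s) ?_ (measure_iUnion_null fun k => htρ k b)
    rw [← iUnion_inter, ← compl_iInter]
    exact inter_subset_inter_left _ (compl_subset_compl.2 (subset_iUnion (fun b => ⋂ k, t k b) b))

lemma measure_eq_zero_of_forall_inf_eq_zero {κ ι : Type*} [Finite κ] [Countable ι]
    [Nonempty ι] {μ : Measure α} {ν : κ → ι → Measure α} (s : Finset κ)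
    (hμ : ∀ i ∈ s, μ ≪ Measure.sum (ν i)) {B : Set α}
    (hB : ∀ a : κ → ι, (s.inf fun i => ν i (a i)) B = 0) : μ B = 0 := by
  classical
  induction s using Finset.induction generalizing B with
  | empty =>
    have hB₀ : B = ∅ := by
      by_contra! hne
      have htop := hB fun _ => Classical.arbitrary ι
      rw [Finset.inf_empty] at htop
      exact ENNReal.top_ne_zero ((OuterMeasure.top_apply hne).symm.trans htop)
    rw [hB₀, measure_empty]
  | insert i s his ih =>
    have hinf (k : ι) (a : κ → ι) : (ν i k ⊓ s.inf fun j => ν j (a j)) B = 0 := by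
      have hka := hB (Function.update a i k)
      rw [Finset.inf_insert, Function.update_self] at hka
      rwa [Finset.inf_congr rfl fun j hj => by
        rw [Function.update_of_ne (ne_of_mem_of_not_mem hj his)]] at hka
    obtain ⟨T, hμT, hT⟩ := exists_measure_inter_eq_zero_of_absolutelyContinuous_sum
      (hμ i (Finset.mem_insert_self i s)) hinf
    rw [← univ_inter B, ← union_compl_self T, union_inter_distrib_right]
    exact measure_union_null hμT (ih (fun j hj => hμ j (Finset.mem_insert_of_mem hj)) hT)

end MeasureLattice

section Vietoris

open TopologicalSpace (NonemptyCompacts)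

variable {Y α : Type*} [TopologicalSpace Y] [TopologicalSpace α] {f : Y → NonemptyCompacts α}
  {F : Set (Y × α)}

lemma isClosed_setOf_exists_mem_nonemptyCompacts (hf : Continuous f) (hF : IsClosed F) :
    IsClosed {y | ∃ p ∈ f y, (y, p) ∈ F} := by
  rw [← isOpen_compl_iff, isOpen_iff_mem_nhds]
  intro y₀ hy₀
  obtain ⟨U, V, hU, hV, hyU, hKV, hUV⟩ := generalized_tube_lemma (isCompact_singleton (x := y₀))
    (f y₀).isCompact hF.isOpen_compl fun p hp hpF => hy₀ ⟨p.2, hp.2, by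
      rwa [← mem_singleton_iff.1 hp.1]⟩
  filter_upwards [hU.mem_nhds (hyU rfl),
    ((NonemptyCompacts.isOpen_subsets_of_isOpen hV).preimage hf).mem_nhds hKV] with y hyU hyV
  rintro ⟨p, hp, hpF⟩
  exact hUV (mk_mem_prod hyU (hyV hp)) hpF

lemma isClosed_setOf_forall_mem_nonemptyCompacts (hf : Continuous f) (hF : IsClosed F) :
    IsClosed {y | ∀ p ∈ f y, (y, p) ∈ F} := by
  rw [← isOpen_compl_iff, isOpen_iff_mem_nhds]
  intro y₀ hy₀
  obtain ⟨p₀, hp₀, hp₀F⟩ : ∃ p ∈ f y₀, (y₀, p) ∉ F := by simpa using hy₀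
  obtain ⟨U, V, hU, hyU, hV, hpV, hUV⟩ := mem_nhds_prod_iff'.1 (hF.isOpen_compl.mem_nhds hp₀F)
  filter_upwards [hU.mem_nhds hyU,
    ((NonemptyCompacts.isOpen_inter_nonempty_of_isOpen hV).preimage hf).mem_nhds
      ⟨p₀, hp₀, hpV⟩] with y hyU ⟨p, hp, hpV⟩ hall
  exact hUV (mk_mem_prod hyU hpV) (hall p hp)

end Vietoris

namespace Fragment

variable {X : Type*} [MetricSpace X]

lemma continuous_val : Continuous (Subtype.val : Fragment X → _) := continuous_subtype_val

lemma fn_eq {γ : Fragment X} {t : ℝ} {x : X} (h : (t, x) ∈ γ.graph) : γ.fn t = x := by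
  have hex : ∃ x, (t, x) ∈ γ.graph := ⟨x, h⟩
  have hfn : γ.fn t = hex.choose := dif_pos hex
  have hdist := (γ.2.2 _ hex.choose_spec _ h).2
  rw [sub_self, abs_zero, mul_zero] at hdist
  exact hfn.trans (dist_le_zero.1 hdist)

lemma time_unique {γ : Fragment X} {s t : ℝ} {x : X} (hs : (s, x) ∈ γ.graph)
    (ht : (t, x) ∈ γ.graph) : s = t := by
  simpa [sub_eq_zero] using (γ.2.2 _ hs _ ht).1

lemma mk_fn_mem {γ : Fragment X} {t : ℝ} (ht : t ∈ γ.dom) : (t, γ.fn t) ∈ γ.graph := by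
  obtain ⟨⟨t, x⟩, h, rfl⟩ := ht
  rwa [fn_eq h]

lemma mem_dom {γ : Fragment X} {t : ℝ} {x : X} (h : (t, x) ∈ γ.graph) : t ∈ γ.dom := ⟨_, h, rfl⟩

lemma isCompact_dom (γ : Fragment X) : IsCompact γ.dom := γ.1.isCompact.image continuous_fst

lemma lipschitzOnWith_fn (γ : Fragment X) : LipschitzOnWith 2 γ.fn γ.dom :=
  LipschitzOnWith.of_dist_le_mul fun s hs t ht => by
    simpa [Real.dist_eq] using (γ.2.2 _ (mk_fn_mem hs) _ (mk_fn_mem ht)).2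

lemma measurableSet_dom (γ : Fragment X) : MeasurableSet γ.dom :=
  γ.isCompact_dom.isClosed.measurableSet

variable [MeasurableSpace X] [BorelSpace X]

lemma aemeasurable_fn (γ : Fragment X) : AEMeasurable γ.fn (volume.restrict γ.dom) :=
  γ.lipschitzOnWith_fn.continuousOn.aemeasurable γ.measurableSet_dom

lemma measure_apply (γ : Fragment X) {A : Set X} (hA : MeasurableSet A) :
    γ.measure A = volume (γ.dom ∩ γ.fn ⁻¹' A) := by
  rw [measure, Measure.map_apply_of_aemeasurable γ.aemeasurable_fn hA,
    Measure.restrict_apply' γ.measurableSet_dom, inter_comm]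

instance (γ : Fragment X) : IsFiniteMeasure γ.measure := ⟨by
  rw [γ.measure_apply MeasurableSet.univ, preimage_univ, inter_univ]
  exact γ.isCompact_dom.measure_lt_top⟩

lemma upperSemicontinuous_measure {F : Set (Fragment X × X)} (hF : IsClosed F) :
    UpperSemicontinuous fun γ : Fragment X => γ.measure (Prod.mk γ ⁻¹' F) := by
  have hmeas : ∀ γ : Fragment X,
      γ.measure (Prod.mk γ ⁻¹' F) = volume (γ.dom ∩ γ.fn ⁻¹' (Prod.mk γ ⁻¹' F)) := fun γ =>
    γ.measure_apply (hF.preimage (by fun_prop)).measurableSet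
  simp only [hmeas]
  intro γ₀ c hc
  obtain ⟨U, hU, hUo, hUc⟩ := exists_isOpen_lt_of_lt _ c hc
  have hopen : IsOpen {γ : Fragment X | ∃ p ∈ γ.1, (γ, p) ∈
      {q : Fragment X × (ℝ × X) | q.2.1 ∈ Uᶜ ∧ (q.1, q.2.2) ∈ F}}ᶜ :=
    (isClosed_setOf_exists_mem_nonemptyCompacts continuous_val
      ((hUo.isClosed_compl.preimage (by fun_prop)).inter
        (hF.preimage (by fun_prop)))).isOpen_compl
  filter_upwards [hopen.mem_nhds fun ⟨p, hp, hpU, hpF⟩ => hpU (hU ⟨mem_dom hp, by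
    rwa [mem_preimage, fn_eq hp]⟩)] with γ hγ
  refine (measure_mono fun t ht => ?_).trans_lt hUc
  by_contra htU
  exact hγ ⟨_, mk_fn_mem ht.1, htU, ht.2⟩

lemma measurable_measure_restrict {F : Set (Fragment X × X)} (hF : IsClosed F) :
    Measurable fun γ : Fragment X => γ.measure.restrict (Prod.mk γ ⁻¹' F) := by
  have hclosed : ∀ A : Set X, IsClosed A →
      Measurable fun γ : Fragment X => γ.measure.restrict (Prod.mk γ ⁻¹' F) A := fun A hA => by
    simp only [Measure.restrict_apply hA.measurableSet]
    exact (upperSemicontinuous_measure ((hA.preimage continuous_snd).inter hF)).measurable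
  refine Measurable.measure_of_isPiSystem (S := {A | IsClosed A}) ?_ isPiSystem_isClosed
    hclosed (hclosed univ isClosed_univ)
  rw [BorelSpace.measurable_eq (α := X), borel_eq_generateFrom_isClosed]

lemma measurable_measure : Measurable (measure : Fragment X → Measure X) := by
  simpa using measurable_measure_restrict (X := X) isClosed_univ

lemma ae_measure_iff {γ : Fragment X} {p : X → Prop} (hp : MeasurableSet {x | p x}) :
    (∀ᵐ x ∂γ.measure, p x) ↔ ∀ᵐ t, t ∈ γ.dom → p (γ.fn t) := by
  rw [measure, ae_map_iff γ.aemeasurable_fn hp, ae_restrict_iff' γ.measurableSet_dom]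

end Fragment

/-- The part of the measure `ν(ℙ)` carried by a set `F` of pairs `(γ, x)`:
each `γ_* 𝓛¹` is restricted to the slice `{x | (γ, x) ∈ F}` before it is averaged. -/
def nuOn {X : Type*} [MetricSpace X] [MeasurableSpace X] (ℙ : Measure (Fragment X))
    (F : Set (Fragment X × X)) : Measure X :=
  ℙ.bind fun γ => γ.measure.restrict (Prod.mk γ ⁻¹' F)

section

variable {X : Type*} [MetricSpace X] [MeasurableSpace X] [BorelSpace X] {ℙ : Measure (Fragment X)}

lemma nuOn_apply {F : Set (Fragment X × X)} (hF : IsClosed F) {A : Set X} (hA : MeasurableSet A) :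
    nuOn ℙ F A = ∫⁻ γ, γ.measure (A ∩ Prod.mk γ ⁻¹' F) ∂ℙ := by
  rw [nuOn, Measure.bind_apply hA (Fragment.measurable_measure_restrict hF).aemeasurable]
  simp only [Measure.restrict_apply hA]

lemma nu_absolutelyContinuous_sum_nuOn {ι : Type*} [Countable ι] {F : ι → Set (Fragment X × X)}
    (hF : ∀ a, IsClosed (F a)) (h : ∀ᵐ γ ∂ℙ, ∀ᵐ x ∂γ.measure, ∃ a, (γ, x) ∈ F a) :
    nu ℙ ≪ Measure.sum fun a => nuOn ℙ (F a) := by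
  refine Measure.AbsolutelyContinuous.mk fun A hA hA0 => ?_
  have hslice : ∀ᵐ γ ∂ℙ, ∀ a, ∀ᵐ x ∂γ.measure, (γ, x) ∈ F a → x ∉ A := by
    refine ae_all_iff.2 fun a => ?_
    filter_upwards [Measure.ae_ae_of_ae_bind
      (Fragment.measurable_measure_restrict (hF a)).aemeasurable
      (measure_eq_zero_iff_ae_notMem.1 (Measure.sum_apply_eq_zero.1 hA0 a))] with γ hγ
    exact (ae_restrict_iff' ((hF a).preimage (by fun_prop)).measurableSet).1 hγ
  rw [nu, Measure.bind_apply hA Fragment.measurable_measure.aemeasurable]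
  refine lintegral_eq_zero_of_ae_eq_zero ?_
  filter_upwards [h, hslice] with γ hγ hγA
  refine measure_eq_zero_iff_ae_notMem.2 ?_
  filter_upwards [hγ, ae_all_iff.2 hγA] with x ⟨a, ha⟩ hx
  exact hx a ha

end

section Tube

variable {V : Type*} [NormedAddCommGroup V] [InnerProductSpace ℝ V] {u v : V} {η : ℝ}

/-- The double cone of vectors whose component orthogonal to the unit vector `u` is at most `η`
times their component parallel to `u`. -/
def tube (u : V) (η : ℝ) : Set V := {v | ‖v - ⟪v, u⟫ • u‖ ≤ η * |⟪v, u⟫|}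

lemma isClosed_tube : IsClosed (tube u η) := isClosed_le (by fun_prop) (by fun_prop)

lemma smul_mem_tube (a : ℝ) (h : v ∈ tube u η) : a • v ∈ tube u η := by
  simp only [tube, Set.mem_ofPred_eq, real_inner_smul_left] at h ⊢
  rw [mul_smul, ← smul_sub, norm_smul, abs_mul, Real.norm_eq_abs, mul_left_comm]
  gcongr

lemma zero_mem_tube : (0 : V) ∈ tube u η := by simp [tube]

lemma tube_mem_nhds (h : ‖v - ⟪v, u⟫ • u‖ < η * |⟪v, u⟫|) : tube u η ∈ 𝓝 v := by
  have hopen : IsOpen {v | ‖v - ⟪v, u⟫ • u‖ < η * |⟪v, u⟫|} := isOpen_lt (by fun_prop) (by fun_prop)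
  filter_upwards [hopen.mem_nhds h] with w hw
  exact hw.le

lemma exists_seq_tube_mem_nhds [SecondCountableTopology V] {C : Set V}
    (hC : ∀ a : ℝ, ∀ v ∈ C, a • v ∈ C) (hCne : (C ∩ sphere 0 1).Nonempty) (hη : 0 < η) :
    ∃ u : ℕ → V, (∀ k, u k ∈ C ∩ sphere 0 1) ∧
      ∀ v ∈ C, v ≠ 0 → ∃ k, tube (u k) η ∈ 𝓝 v := by
  have : Nonempty ↥(C ∩ sphere (0 : V) 1) := hCne.to_subtype
  obtain ⟨u, hu⟩ := TopologicalSpace.exists_dense_seq ↥(C ∩ sphere (0 : V) 1)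
  refine ⟨fun k => u k, fun k => (u k).2, fun v hv hv0 => ?_⟩
  have hv' : ‖v‖ ≠ 0 := norm_ne_zero_iff.2 hv0
  let direction : ↥(C ∩ sphere (0 : V) 1) := ⟨‖v‖⁻¹ • v, hC _ v hv, by simp [norm_smul, hv']⟩
  have hinner : ⟪v, (direction : V)⟫ = ‖v‖ := by
    simp only [direction, real_inner_smul_right, real_inner_self_eq_norm_sq]
    field_simp
  have hopen : IsOpen {w : ↥(C ∩ sphere (0 : V) 1) |
      ‖v - ⟪v, (w : V)⟫ • (w : V)‖ < η * |⟪v, (w : V)⟫|} :=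
    isOpen_lt (by fun_prop) (by fun_prop)
  obtain ⟨_, hk, k, rfl⟩ := hu.inter_open_nonempty _ hopen ⟨direction, by
    simp only [Set.mem_ofPred_eq, hinner, direction, smul_smul, mul_inv_cancel₀ hv', one_smul,
      sub_self, norm_zero]
    positivity⟩
  exact ⟨k, tube_mem_nhds hk⟩

lemma exists_eventually_sub_mem_tube {ι : Type*} [Nonempty ι] {u : ι → V} {C : Set V}
    (hC : IsClosed C) (hCsmul : ∀ a : ℝ, ∀ v ∈ C, a • v ∈ C)
    (hCu : ∀ v ∈ C, v ≠ 0 → ∃ k, tube (u k) η ∈ 𝓝 v) {f : ℝ → V} {S : Set ℝ} {t δ : ℝ}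
    (hf : DifferentiableWithinAt ℝ f S t) (hfC : ∀ s ∈ S, f s - f t ∈ C) (hδ : 0 < δ)
    (hfδ : ∀ s ∈ S, δ * |s - t| ≤ ‖f s - f t‖) :
    ∃ k, ∀ᶠ s in 𝓝[S] t, f s - f t ∈ tube (u k) η := by
  suffices hslope : ∃ k, ∀ᶠ s in 𝓝[S \ {t}] t, slope f t s ∈ tube (u k) η by
    obtain ⟨k, hk⟩ := hslope
    refine ⟨k, eventually_nhdsWithin_iff.2 ?_⟩
    filter_upwards [eventually_nhdsWithin_iff.1 hk] with s hs hsS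
    rcases eq_or_ne s t with rfl | hst
    · simpa using zero_mem_tube
    · simpa [sub_smul_slope] using smul_mem_tube (s - t) (hs ⟨hsS, hst⟩)
  rcases eq_or_neBot (𝓝[S \ {t}] t) with hbot | hne
  · exact ⟨Classical.arbitrary ι, by simp [hbot]⟩
  have hlim := hasDerivWithinAt_iff_tendsto_slope.1 hf.hasDerivWithinAt
  have hmem : ∀ᶠ s in 𝓝[S \ {t}] t, slope f t s ∈ C :=
    eventually_nhdsWithin_of_forall fun s hs => hCsmul _ _ (hfC s hs.1)
  have hnorm : ∀ᶠ s in 𝓝[S \ {t}] t, δ ≤ ‖slope f t s‖ :=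
    eventually_nhdsWithin_of_forall fun s hs => by
      rw [slope_def_module, norm_smul, norm_inv, Real.norm_eq_abs, inv_mul_eq_div,
        le_div_iff₀ (abs_pos.2 (sub_ne_zero.2 hs.2))]
      exact hfδ s hs.1
  obtain ⟨k, hk⟩ := hCu _ (hC.mem_of_tendsto hlim hmem)
    (norm_pos_iff.1 (hδ.trans_le (ge_of_tendsto hlim.norm hnorm)))
  exact ⟨k, hlim hk⟩

/-- The family `u` is linearly independent, with `b` as a quantitative lower bound. -/
def IsIndepWith {ι : Type*} [Fintype ι] (b : ℝ) (u : ι → V) : Prop :=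
  ∀ a : ι → ℝ, b * ‖a‖ ≤ ‖∑ i, a i • u i‖

section Coordinates

variable {ι : Type*} [Fintype ι] {w : ι → V} {b : ℝ}

lemma IsIndepWith.linearIndependent (hb : 0 < b) (hw : IsIndepWith b w) :
    LinearIndependent ℝ w :=
  Fintype.linearIndependent_iff.2 fun a ha i => by
    have hle := hw a
    rw [ha, norm_zero] at hle
    have hnorm : ‖a‖ = 0 := (norm_nonneg a).antisymm' (nonpos_of_mul_nonpos_right hle hb)
    rw [norm_eq_zero.1 hnorm, Pi.zero_apply]

lemma IsIndepWith.exists_coordinates [DecidableEq ι] [FiniteDimensional ℝ V] (hb : 0 < b)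
    (hw : IsIndepWith b w) (hcard : Fintype.card ι = Module.finrank ℝ V) :
    ∃ L : V ≃L[ℝ] (ι → ℝ), (∀ v, b * ‖L v‖ ≤ ‖v‖) ∧
      ∀ i, L (w i) = Pi.single i 1 := by
  have hli := hw.linearIndependent hb
  let B := Module.Basis.mk hli (hli.span_eq_top_of_card_eq_finrank' hcard).ge
  have hB : ∀ i, B i = w i := fun i => Module.Basis.mk_apply _ _ i
  refine ⟨B.equivFunL, fun v => ?_, fun i => ?_⟩
  · refine (hw (B.equivFunL v)).trans_eq ?_
    simp_rw [← hB]
    exact congrArg norm (B.sum_equivFun v)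
  · rw [← hB]
    ext j
    exact (B.equivFun_self i j).trans (by simp [Pi.single_apply, eq_comm])

lemma IsIndepWith.exists_narrow_coordinates [FiniteDimensional ℝ V] (hb : 0 < b)
    (hw : IsIndepWith b w) (hcard : Fintype.card ι = Module.finrank ℝ V) {M : ℕ} (hM : 1 ≤ M) :
    ∃ L : V ≃L[ℝ] (ι → ℝ), ∀ i, ∀ v ∈ tube (w i) (b / (2 * M)), ∀ j ≠ i,
      M * |L v j| ≤ |L v i| := by
  classical
  obtain ⟨L, hL, hLw⟩ := hw.exists_coordinates hb hcard
  refine ⟨L, fun i v hv j hj => ?_⟩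
  set s := ⟪v, w i⟫
  have hM' : (1 : ℝ) ≤ M := by exact_mod_cast hM
  set R := L (v - s • w i) with hR
  have hRs : 2 * (M * ‖R‖) ≤ |s| := by
    have hRv := (hL (v - s • w i)).trans hv
    rw [div_mul_eq_mul_div, le_div_iff₀ (by positivity)] at hRv
    exact le_of_mul_le_mul_left (by linarith) hb
  have hLj : L v j = R j := by simp [hR, hLw, hj]
  have hLi : L v i = s + R i := by simp [hR, hLw]
  have hRM : ‖R‖ ≤ M * ‖R‖ := le_mul_of_one_le_left (norm_nonneg _) hM'
  calc M * |L v j| ≤ M * ‖R‖ := by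
        rw [hLj]
        gcongr
        exact norm_le_pi_norm R j
    _ ≤ |s| - |R i| := by
        have := norm_le_pi_norm R i
        rw [Real.norm_eq_abs] at this
        linarith
    _ ≤ |L v i| := by
        rw [hLi]
        simpa using abs_sub_abs_le_abs_sub s (-R i)

end Coordinates

end Tube

section Cone

variable {n m : ℕ} {C : Set (E n)}

lemma IsCone.isClosed (hC : IsCone C) : IsClosed C := by
  obtain ⟨w, θ, -, -, rfl⟩ := hC
  exact isClosed_le (by fun_prop) (by fun_prop)

lemma IsCone.smul_mem (hC : IsCone C) (a : ℝ) : ∀ v ∈ C, a • v ∈ C := by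
  obtain ⟨w, θ, -, -, rfl⟩ := hC
  intro v hv
  simp only [cone, Set.mem_ofPred_eq, real_inner_smul_left] at hv ⊢
  rw [norm_smul, abs_mul, Real.norm_eq_abs, mul_left_comm]
  gcongr

lemma IsCone.inter_sphere_nonempty (hC : IsCone C) : (C ∩ sphere 0 1).Nonempty := by
  obtain ⟨w, θ, hw, hθ, rfl⟩ := hC
  exact ⟨w, by simp [cone, hw, hθ.2.le], by simpa using hw⟩

lemma IndepCones.exists_isIndepWith {C : Fin m → Set (E n)} (hC : ∀ i, IsCone (C i))
    (h : IndepCones C) :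
    ∃ b > 0, ∀ u : Fin m → E n, (∀ i, u i ∈ C i ∩ sphere 0 1) → IsIndepWith b u := by
  have hK : IsCompact ((Set.univ.pi fun i => C i ∩ sphere (0 : E n) 1) ×ˢ
      sphere (0 : Fin m → ℝ) 1) :=
    (isCompact_univ_pi fun i => (isCompact_sphere _ _).inter_left (hC i).isClosed).prod
      (isCompact_sphere _ _)
  obtain ⟨b, hb, hle⟩ := hK.exists_forall_le'
    (f := fun p : (Fin m → E n) × (Fin m → ℝ) => ‖∑ i, p.2 i • p.1 i‖)
    (by fun_prop) (a := 0) fun p ⟨hu, ha⟩ => by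
      have hli := h p.1 fun i =>
        ⟨(hu i (mem_univ i)).1, ne_zero_of_mem_unit_sphere ⟨_, (hu i (mem_univ i)).2⟩⟩
      refine norm_pos_iff.2 fun h0 => ne_zero_of_mem_unit_sphere ⟨_, ha⟩ ?_
      exact funext (Fintype.linearIndependent_iff.1 hli p.2 h0)
  refine ⟨b, hb, fun u hu a => ?_⟩
  rcases eq_or_ne a 0 with rfl | ha
  · simp
  have ha' : 0 < ‖a‖ := norm_pos_iff.2 ha
  have hunit := hle (u, ‖a‖⁻¹ • a) ⟨fun i _ => hu i, by simp [norm_smul, ha'.ne']⟩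
  simp only [Pi.smul_apply, smul_eq_mul, mul_smul, ← Finset.smul_sum, norm_smul, norm_inv,
    norm_norm] at hunit
  rwa [inv_mul_eq_div, le_div_iff₀ ha'] at hunit

end Cone

section Aligned

variable {X V : Type*} [MetricSpace X] [NormedAddCommGroup V] {φ : X → V} {N : Set V} {a r : ℝ}

/-- The pairs `(γ, x)` such that `γ` passes through `x` at a time within `r / 3` of `a` and, over
all times which are `r`-close to that time, the increments of `φ ∘ γ` lie in `N` and have speed at
least `r`. Any two times at which `γ` witnesses this are `r`-close to each other. -/
def aligned (φ : X → V) (N : Set V) (a r : ℝ) : Set (Fragment X × X) :=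
  {y | ∃ p ∈ y.1.graph, p.2 = y.2 ∧ |p.1 - a| ≤ r / 3 ∧ ∀ q ∈ y.1.graph, |q.1 - p.1| < r →
    φ q.2 - φ p.2 ∈ N ∧ r * |q.1 - p.1| ≤ ‖φ q.2 - φ p.2‖}

lemma isClosed_aligned (hφ : Continuous φ) (hN : IsClosed N) : IsClosed (aligned φ N a r) := by
  have hfar : IsClosed {y : (Fragment X × ℝ × X) × ℝ × X | r ≤ |y.2.1 - y.1.2.1|} :=
    isClosed_le (by fun_prop) (by fun_prop)
  have hfast : IsClosed {y : (Fragment X × ℝ × X) × ℝ × X |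
      r * |y.2.1 - y.1.2.1| ≤ ‖φ y.2.2 - φ y.1.2.2‖} := isClosed_le (by fun_prop) (by fun_prop)
  have hN' : IsClosed {y : (Fragment X × ℝ × X) × ℝ × X | φ y.2.2 - φ y.1.2.2 ∈ N} :=
    hN.preimage (by fun_prop)
  have hall := isClosed_setOf_forall_mem_nonemptyCompacts
    (f := fun y : Fragment X × ℝ × X => y.1.1)
    (Fragment.continuous_val.comp continuous_fst) (hfar.union (hN'.inter hfast))
  have hpoint : IsClosed {y : (Fragment X × X) × ℝ × X | y.2.2 = y.1.2} :=
    isClosed_eq (by fun_prop) (by fun_prop)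
  have htime : IsClosed {y : (Fragment X × X) × ℝ × X | |y.2.1 - a| ≤ r / 3} :=
    isClosed_le (by fun_prop) (by fun_prop)
  have hall' := hall.preimage
    (show Continuous fun y : (Fragment X × X) × ℝ × X => (y.1.1, y.2) by fun_prop)
  convert isClosed_setOf_exists_mem_nonemptyCompacts (f := fun y : Fragment X × X => y.1.1)
    (Fragment.continuous_val.comp continuous_fst) (hpoint.inter (htime.inter hall')) using 1
  ext y
  simp only [aligned, Fragment.graph, SetLike.mem_coe, Set.mem_ofPred_eq, mem_inter_iff, mem_union,
    mem_preimage, or_iff_not_imp_left, not_le]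

lemma increment_of_mem_aligned (hr : 0 < r) {γ : Fragment X} {s t : ℝ} {x y : X}
    (hs : (s, x) ∈ γ.graph) (ht : (t, y) ∈ γ.graph) (hx : (γ, x) ∈ aligned φ N a r)
    (hy : (γ, y) ∈ aligned φ N a r) : φ x - φ y ∈ N ∧ r * |s - t| ≤ ‖φ x - φ y‖ := by
  obtain ⟨⟨s', _⟩, hs', rfl, hsa, -⟩ := hx
  obtain ⟨⟨t', _⟩, ht', rfl, hta, hinc⟩ := hy
  obtain rfl := Fragment.time_unique hs hs'
  obtain rfl := Fragment.time_unique ht ht'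
  have hst : |s - t| ≤ r / 3 + r / 3 := by
    refine (abs_sub_le s a t).trans (add_le_add hsa ?_)
    rwa [abs_sub_comm]
  exact hinc _ hs (by linarith)

lemma measure_inter_aligned_le [MeasurableSpace X] [BorelSpace X] (hφ : Continuous φ)
    (hN : IsClosed N) (hr : 0 < r) (γ : Fragment X) {A : Set X} (hA : MeasurableSet A) :
    γ.measure (A ∩ Prod.mk γ ⁻¹' aligned φ N a r) ≤ ENNReal.ofReal r⁻¹ * ediam (φ '' A) := by
  rw [γ.measure_apply (hA.inter ((isClosed_aligned hφ hN).preimage (by fun_prop)).measurableSet)]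
  refine (Real.volume_le_diam _).trans (ediam_le fun s ⟨hs, hsA, hsN⟩ t ⟨ht, htA, htN⟩ => ?_)
  have hspeed := (increment_of_mem_aligned hr (Fragment.mk_fn_mem hs) (Fragment.mk_fn_mem ht)
    hsN htN).2
  calc edist s t ≤ ENNReal.ofReal (r⁻¹ * ‖φ (γ.fn s) - φ (γ.fn t)‖) := by
        rw [edist_dist, Real.dist_eq]
        refine ENNReal.ofReal_le_ofReal ?_
        rwa [inv_mul_eq_div, le_div_iff₀' hr]
    _ = ENNReal.ofReal r⁻¹ * edist (φ (γ.fn s)) (φ (γ.fn t)) := by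
        rw [ENNReal.ofReal_mul (by positivity), edist_dist, dist_eq_norm]
    _ ≤ _ := by
        gcongr
        exact edist_le_ediam_of_mem (mem_image_of_mem φ hsA) (mem_image_of_mem φ htA)

end Aligned

section Pieces

variable {X V : Type*} [MetricSpace X] [NormedAddCommGroup V] {φ : X → V} {N : Set V} {a r : ℝ}

lemma isNarrow_image_aligned [NormedSpace ℝ V] {ι : Type*} {M : ℕ} {i : ι}
    {L : V →ₗ[ℝ] (ι → ℝ)} (hL : ∀ v ∈ N, ∀ j ≠ i, M * |L v j| ≤ |L v i|) (hr : 0 < r)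
    (γ : Fragment X) :
    IsNarrow M i ((fun x => L (φ x)) '' (Prod.mk γ ⁻¹' aligned φ N a r)) := by
  rintro _ ⟨x, hx, rfl⟩ _ ⟨y, hy, rfl⟩ j hj
  obtain ⟨⟨s, _⟩, hs, rfl, -⟩ := id hx
  obtain ⟨⟨t, _⟩, ht, rfl, -⟩ := id hy
  simpa using hL _ (increment_of_mem_aligned hr hs ht hx hy).1 j hj

lemma nuOn_aligned_preimage_cube_le [MeasurableSpace X] [BorelSpace X] [NormedSpace ℝ V]
    {ι : Type*} [Fintype ι] {M : ℕ} (hM : M ≠ 0) {ℙ : Measure (Fragment X)} (hφ : Continuous φ)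
    (hN : IsClosed N) (hr : 0 < r) (L : V ≃L[ℝ] (ι → ℝ)) (k : ℕ) (q : ι → ℤ) :
    nuOn ℙ (aligned φ N a r) ((fun x => L (φ x)) ⁻¹' cube M k q) ≤
      ENNReal.ofReal r⁻¹ * ‖(L.symm : (ι → ℝ) →L[ℝ] V)‖₊ * ((M : ℝ≥0∞)⁻¹ ^ k *
        hitMass ℙ (fun γ => (fun x => L (φ x)) '' (Prod.mk γ ⁻¹' aligned φ N a r))
          (cube M k q)) := by
  set Q := (fun x => L (φ x)) ⁻¹' cube M k q
  set c := ENNReal.ofReal r⁻¹ * ‖(L.symm : (ι → ℝ) →L[ℝ] V)‖₊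
  have hQ : MeasurableSet Q := (L.continuous.comp hφ).measurable (measurableSet_cube k q)
  have hdiam : ENNReal.ofReal r⁻¹ * ediam (φ '' Q) ≤ c * (M : ℝ≥0∞)⁻¹ ^ k := by
    rw [mul_assoc]
    gcongr
    calc ediam (φ '' Q) ≤ ediam (L ⁻¹' cube M k q) :=
          ediam_mono (image_preimage_subset φ (L ⁻¹' cube M k q))
      _ ≤ _ := (L.antilipschitz.ediam_preimage_le _).trans (by gcongr; exact ediam_cube_le hM k q)
  have hc : c * (M : ℝ≥0∞)⁻¹ ^ k ≠ ∞ := by finiteness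
  rw [nuOn_apply (isClosed_aligned hφ hN) hQ, ← mul_assoc, hitMass,
    ← lintegral_const_mul' _ _ hc]
  refine lintegral_mono fun γ => ?_
  by_cases hhit : γ ∈ {γ | ((fun x => L (φ x)) '' (Prod.mk γ ⁻¹' aligned φ N a r) ∩
      cube M k q).Nonempty}
  · rw [indicator_of_mem hhit, Pi.one_apply, mul_one]
    exact (measure_inter_aligned_le hφ hN hr γ hQ).trans hdiam
  · have hempty : Q ∩ Prod.mk γ ⁻¹' aligned φ N a r = ∅ :=
      eq_empty_of_forall_notMem fun x hx => hhit ⟨_, mem_image_of_mem _ hx.2, hx.1⟩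
    rw [hempty, measure_empty]
    exact zero_le

lemma exists_mem_aligned {γ : Fragment X} {t δ : ℝ} (ht : t ∈ γ.dom) (hδ : 0 < δ)
    (hspeed : ∀ p ∈ γ.graph, ∀ q ∈ γ.graph, δ * |p.1 - q.1| ≤ ‖φ p.2 - φ q.2‖)
    (hinc : ∀ᶠ s in 𝓝[γ.dom] t, φ (γ.fn s) - φ (γ.fn t) ∈ N) :
    ∃ (a : ℚ) (j : ℕ), (γ, γ.fn t) ∈ aligned φ N a (1 / (j + 1)) := by
  obtain ⟨ε, hε, hεN⟩ := Metric.eventually_nhds_iff.1 (eventually_nhdsWithin_iff.1 hinc)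
  obtain ⟨j, hj⟩ := exists_nat_one_div_lt (lt_min hε hδ)
  obtain ⟨a, ha⟩ := exists_rat_near t (show (0 : ℝ) < 1 / (j + 1) / 3 by positivity)
  refine ⟨a, j, _, Fragment.mk_fn_mem ht, rfl, ha.le, fun ⟨s, x⟩ hs hst => ⟨?_, ?_⟩⟩
  · obtain rfl := Fragment.fn_eq hs
    exact hεN (hst.trans (hj.trans_le (min_le_left _ _))) (Fragment.mem_dom hs)
  · refine le_trans ?_ (hspeed _ hs _ (Fragment.mk_fn_mem ht))
    gcongr
    exact (hj.trans_le (min_le_right _ _)).le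

end Pieces

section Representation

variable {X : Type*} [MetricSpace X] [MeasurableSpace X] [BorelSpace X] {n : ℕ} {φ : X → E n}
  {K : ℝ≥0} {C : Set (E n)} {η : ℝ}

lemma IsConeCurve.ae_exists_mem_aligned {γ : Fragment X} (hγ : IsConeCurve φ C γ)
    (hφ : LipschitzWith K φ) (hC : IsCone C) {u : ℕ → E n}
    (hu : ∀ v ∈ C, v ≠ 0 → ∃ k, tube (u k) η ∈ 𝓝 v) :
    ∀ᵐ x ∂γ.measure, ∃ i : ℕ × ℚ × ℕ,
      (γ, x) ∈ aligned φ (tube (u i.1) η) i.2.1 (1 / (i.2.2 + 1)) := by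
  obtain ⟨δ, hδ, hcurve⟩ := hγ
  have hspeed : ∀ p ∈ γ.graph, ∀ q ∈ γ.graph, δ * |p.1 - q.1| ≤ ‖φ p.2 - φ q.2‖ :=
    fun p hp q hq => by simpa using (hcurve p hp q hq).2
  have hmeas : MeasurableSet {x | ∃ i : ℕ × ℚ × ℕ,
      (γ, x) ∈ aligned φ (tube (u i.1) η) i.2.1 (1 / (i.2.2 + 1))} := by
    rw [Set.ofPred_exists]
    exact .iUnion fun i =>
      ((isClosed_aligned hφ.continuous isClosed_tube).preimage (by fun_prop)).measurableSet
  rw [Fragment.ae_measure_iff hmeas]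
  have hlip := hφ.comp_lipschitzOnWith γ.lipschitzOnWith_fn
  filter_upwards [hlip.ae_differentiableWithinAt_of_mem_real] with t hdiff ht
  obtain ⟨k, hk⟩ := exists_eventually_sub_mem_tube hC.isClosed hC.smul_mem hu (hdiff ht)
    (fun s hs => (hcurve _ (Fragment.mk_fn_mem hs) _ (Fragment.mk_fn_mem ht)).1) hδ
    (fun s hs => hspeed _ (Fragment.mk_fn_mem hs) _ (Fragment.mk_fn_mem ht))
  obtain ⟨a, j, hmem⟩ := exists_mem_aligned ht hδ hspeed hk
  exact ⟨(k, a, j), hmem⟩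

lemma IsConeAlbertiRep.exists_absolutelyContinuous_sum {μ : Measure X} {ℙ : Measure (Fragment X)}
    (h : IsConeAlbertiRep μ φ C ℙ) (hφ : LipschitzWith K φ) (hC : IsCone C) (hη : 0 < η) :
    ∃ u : ℕ → E n, (∀ k, u k ∈ C ∩ sphere 0 1) ∧ μ ≪ Measure.sum fun i : ℕ × ℚ × ℕ =>
      nuOn ℙ (aligned φ (tube (u i.1) η) i.2.1 (1 / (i.2.2 + 1))) := by
  obtain ⟨-, hμ, hcurve⟩ := h
  obtain ⟨u, huC, hu⟩ := exists_seq_tube_mem_nhds hC.smul_mem hC.inter_sphere_nonempty hη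
  refine ⟨u, huC, hμ.trans (nu_absolutelyContinuous_sum_nuOn
    (fun i => isClosed_aligned hφ.continuous isClosed_tube) ?_)⟩
  filter_upwards [hcurve] with γ hγ
  exact hγ.ae_exists_mem_aligned hφ hC hu

end Representation

section Null

lemma exists_scale (n : ℕ) {α : ℝ} (hα : α < 1) :
    ∃ M : ℕ, 1 < M ∧ (3 : ℝ≥0∞) ^ n * (M : ℝ≥0∞) ^ α < M := by
  have hlim : Tendsto (fun M : ℕ => (M : ℝ≥0∞) ^ (1 - α)) atTop (𝓝 ∞) :=
    (ENNReal.tendsto_rpow_at_top (by linarith)).comp ENNReal.tendsto_nat_nhds_top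
  have h3 : (3 : ℝ≥0∞) ^ n < ∞ := ENNReal.pow_lt_top (by simp)
  obtain ⟨M, hpow, hM⟩ := ((hlim.eventually_const_lt h3).and (eventually_gt_atTop 1)).exists
  have hM0 : (M : ℝ≥0∞) ≠ 0 := by exact_mod_cast (by omega : M ≠ 0)
  have hMt : (M : ℝ≥0∞) ≠ ∞ := ENNReal.natCast_ne_top M
  have hα0 : (M : ℝ≥0∞) ^ α ≠ 0 := by simp [ENNReal.rpow_eq_zero_iff, hM0, hMt]
  have hαt : (M : ℝ≥0∞) ^ α ≠ ∞ := by simp [ENNReal.rpow_eq_top_iff, hM0, hMt]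
  refine ⟨M, hM, ?_⟩
  calc (3 : ℝ≥0∞) ^ n * (M : ℝ≥0∞) ^ α < (M : ℝ≥0∞) ^ (1 - α) * (M : ℝ≥0∞) ^ α :=
        ENNReal.mul_lt_mul_left hα0 hαt hpow
    _ = M := by rw [← ENNReal.rpow_add _ _ hM0 hMt, sub_add_cancel, ENNReal.rpow_one]

variable {X : Type*} [MetricSpace X] [MeasurableSpace X] [BorelSpace X] {K : ℝ≥0} {s : ℝ}

lemma inf_nuOn_aligned_apply_eq_zero {ι V : Type*} [Fintype ι] [Nonempty ι]
    [NormedAddCommGroup V] [NormedSpace ℝ V] {φ : X → V} (hφ : LipschitzWith K φ)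
    {ℙ : ι → Measure (Fragment X)} [∀ i, IsFiniteMeasure (ℙ i)] {M : ℕ} (hM : 1 < M)
    {L : V ≃L[ℝ] (ι → ℝ)} {N : ι → Set V} (hN : ∀ i, IsClosed (N i))
    (hL : ∀ i, ∀ v ∈ N i, ∀ j ≠ i, M * |L v j| ≤ |L v i|) {a r : ι → ℝ} (hr : ∀ i, 0 < r i)
    (hs : 0 < s)
    (hMs : (3 : ℝ≥0∞) ^ Fintype.card ι * (M : ℝ≥0∞) ^ (s / Fintype.card ι) < M)
    {B : Set X} (hB : μH[s] B = 0) :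
    (Finset.univ.inf fun i => nuOn (ℙ i) (aligned φ (N i) (a i) (r i))) B = 0 := by
  set ν := Finset.univ.inf fun i => nuOn (ℙ i) (aligned φ (N i) (a i) (r i))
  set ψ : X → ι → ℝ := fun x => L (φ x)
  have hψ : LipschitzWith (‖(L : V →L[ℝ] (ι → ℝ))‖₊ * K) ψ := L.lipschitz.comp hφ
  have hψm : Measurable ψ := hψ.continuous.measurable
  have hnull : μH[s] (ψ '' B) = 0 :=
    nonpos_iff_eq_zero.1 ((hψ.hausdorffMeasure_image_le hs.le B).trans_eq (by rw [hB, mul_zero]))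
  have hcube : ∀ k q i, ν.map ψ (cube M k q) ≤
      ENNReal.ofReal (r i)⁻¹ * ‖(L.symm : (ι → ℝ) →L[ℝ] V)‖₊ * ((M : ℝ≥0∞)⁻¹ ^ k *
        hitMass (ℙ i) (fun γ => ψ '' (Prod.mk γ ⁻¹' aligned φ (N i) (a i) (r i))) (cube M k q)) :=
    fun k q i => by
      rw [Measure.map_apply hψm (measurableSet_cube k q)]
      have hle : ν ≤ nuOn (ℙ i) (aligned φ (N i) (a i) (r i)) := Finset.inf_le (Finset.mem_univ i)
      exact (hle _).trans
        (nuOn_aligned_preimage_cube_le (by omega) hφ.continuous (hN i) (hr i) L k q)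
  have hzero := measure_eq_zero_of_hausdorffMeasure_eq_zero hM
    (fun i => isNarrow_image_aligned (L := L.toLinearMap) (hL i) (hr i)) hs hMs
    (fun i => by finiteness) hcube hnull
  exact measure_mono_null (subset_preimage_image ψ B)
    (nonpos_iff_eq_zero.1 ((Measure.le_map_apply hψm.aemeasurable _).trans_eq hzero))

lemma IndepCones.exists_inf_nuOn_aligned_apply_eq_zero {n : ℕ} [NeZero n] {C : Fin n → Set (E n)}
    (hind : IndepCones C) (hC : ∀ i, IsCone (C i)) {φ : X → E n} (hφ : LipschitzWith K φ)
    {ℙ : Fin n → Measure (Fragment X)} [∀ i, IsFiniteMeasure (ℙ i)] (hs : 0 < s) (hsn : s < n)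
    {B : Set X} (hB : μH[s] B = 0) :
    ∃ η > 0, ∀ u : Fin n → E n, (∀ i, u i ∈ C i ∩ sphere 0 1) → ∀ a r : Fin n → ℝ,
      (∀ i, 0 < r i) →
        (Finset.univ.inf fun i => nuOn (ℙ i) (aligned φ (tube (u i) η) (a i) (r i))) B = 0 := by
  obtain ⟨b, hb, hindep⟩ := hind.exists_isIndepWith hC
  obtain ⟨M, hM, hMs⟩ := exists_scale n ((div_lt_one (hs.trans hsn)).2 hsn)
  have : (0 : ℝ) < M := by exact_mod_cast zero_lt_one.trans hM
  refine ⟨b / (2 * M), by positivity, fun u hu a r hr => ?_⟩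
  obtain ⟨L, hL⟩ := (hindep u hu).exists_narrow_coordinates hb (by simp) hM.le
  exact inf_nuOn_aligned_apply_eq_zero hφ hM (fun _ => isClosed_tube) hL hr hs
    (by simpa using hMs) hB

end Null

theorem dimH_ge_of_indep_alberti_general {X : Type*} [MetricSpace X] [MeasurableSpace X]
    [BorelSpace X] (μ : Measure X) (n : ℕ) (h : HasIndepAlberti μ n) (B : Set X) (hB : 0 < μ B) :
    (n : ℝ≥0∞) ≤ dimH B := by
  rcases eq_or_ne n 0 with rfl | hn
  · simp
  have : NeZero n := ⟨hn⟩
  obtain ⟨φ, ⟨K, hφ⟩, C, hC, hind, hrep⟩ := h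
  choose ℙ hℙ using hrep
  have (i : Fin n) : IsProbabilityMeasure (ℙ i) := (hℙ i).1
  by_contra! hlt
  obtain ⟨s, hBs, hsn⟩ := ENNReal.lt_iff_exists_nnreal_btwn.1 hlt
  have hs : (0 : ℝ) < s := by exact_mod_cast zero_le.trans_lt hBs
  obtain ⟨η, hη, hnull⟩ := hind.exists_inf_nuOn_aligned_apply_eq_zero hC hφ (ℙ := ℙ) hs
    (by exact_mod_cast hsn) (hausdorffMeasure_of_dimH_lt hBs)
  choose u hu hμ using fun i => (hℙ i).exists_absolutelyContinuous_sum hφ (hC i) hη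
  exact hB.ne' (measure_eq_zero_of_forall_inf_eq_zero Finset.univ (fun i _ => hμ i) fun a =>
    hnull _ (fun i => hu i _) _ _ fun i => Nat.one_div_pos_of_nat)

/-- If `μ` has `n` independent Alberti representations then every Borel
set of positive measure has Hausdorff dimension at least `n`, i.e. `dim_H μ ≥ n`. -/
theorem dimH_ge_of_indep_alberti (μ : Measure X) [SigmaFinite μ] (n : ℕ)
    (h : HasIndepAlberti μ n) :
    ∀ B : Set X, MeasurableSet B → 0 < μ B → (n : ℝ≥0∞) ≤ dimH B :=
  fun B _ hB => dimH_ge_of_indep_alberti_general μ n h B hB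

end BKO
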